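/- arXiv:1808.01273 — 3 statements merged into one kernel-verified Lean document; each statement's English description precedes it below -/
import Mathlib

section
/- For every integer k ≥ 1, every 0 < p < ∞, and every polynomial P on ℝ^k, one has (∫_ℝ |t|^p dγ_1(t))^{1/p} · ‖∇P‖_{L^p(γ_k)} ≤ (deg P) · ‖P‖_{L^p(γ_k)}. -/
open MeasureTheory ProbabilityTheory Real

/-- The standard Gaussian measure on `ℝ^k`. -/
noncomputable def gaussMeasure (k : ℕ) : Measure (Fin k → ℝ) :=
  Measure.pi fun _ => gaussianReal 0 1

/-- The `L^p` norm with respect to the standard Gaussian measure on `ℝ^k`. -/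
noncomputable def lpNormGauss {k : ℕ} (p : ℝ) (f : (Fin k → ℝ) → ℝ) : ℝ :=
  (∫ x, |f x| ^ p ∂(gaussMeasure k)) ^ (1 / p)

/-- The Euclidean length of the gradient of a polynomial on `ℝ^k`. -/
noncomputable def gradNorm {k : ℕ} (P : MvPolynomial (Fin k) ℝ) (x : Fin k → ℝ) : ℝ :=
  Real.sqrt (∑ j, (MvPolynomial.eval x (MvPolynomial.pderiv j P)) ^ 2)

/-- Monotonicity of the circle average, up to a finite set of exceptional points. -/
theorem circleAverage_le_of_forall_notMem {f g : ℂ → ℝ} {S : Set ℂ} (hS : S.Finite)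
    (hf : CircleIntegrable f 0 1) (hg : CircleIntegrable g 0 1)
    (h : ∀ z, ‖z‖ = 1 → z ∉ S → f z ≤ g z) :
    circleAverage f 0 1 ≤ circleAverage g 0 1 := by
  classical
  have hev : f =ᶠ[Filter.codiscreteWithin (Metric.sphere (0 : ℂ) |1|)]
      fun z => if z ∈ S then g z else f z := by
    have : Sᶜ ∈ Filter.codiscreteWithin (Metric.sphere (0 : ℂ) |1|) := by
      exact Filter.codiscreteWithin_mono (Set.subset_univ _) hS.compl_mem_codiscrete
    filter_upwards [this] with z hz
    simp [show z ∉ S from hz]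
  rw [circleAverage_congr_codiscreteWithin hev one_ne_zero]
  refine circleAverage_mono (hf.congr_codiscreteWithin hev) hg fun z hz => ?_
  have hz1 : ‖z‖ = 1 := by simpa using hz
  by_cases hzS : z ∈ S
  · simp [hzS]
  · simpa [hzS] using h z hz1 hzS

noncomputable section AngularDeriv

open Polynomial

/-- The operator on polynomials of degree at most `2n` which corresponds to `-i d/dθ` under
`T(θ) = e^{-inθ} Q(e^{iθ})`. -/
def angularDeriv (n : ℕ) (Q : ℂ[X]) : ℂ[X] := X * derivative Q - C (n : ℂ) * Q

theorem coeff_angularDeriv (n : ℕ) (Q : ℂ[X]) (m : ℕ) :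
    (angularDeriv n Q).coeff m = ((m : ℂ) - n) * Q.coeff m := by
  cases m with
  | zero => simp [angularDeriv]
  | succ m =>
    simp [angularDeriv, coeff_X_mul, coeff_derivative]
    ring

theorem natDegree_angularDeriv_le {n : ℕ} {Q : ℂ[X]} (hQ : Q.natDegree ≤ 2 * n) :
    (angularDeriv n Q).natDegree ≤ 2 * n := by
  rw [natDegree_le_iff_coeff_eq_zero] at hQ ⊢
  intro m hm
  rw [coeff_angularDeriv, hQ m hm, mul_zero]

theorem natDegree_angularDeriv {n : ℕ} (hn : n ≠ 0) {Q : ℂ[X]} (hQ : Q.natDegree = 2 * n) :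
    (angularDeriv n Q).natDegree = 2 * n := by
  refine natDegree_eq_of_le_of_coeff_ne_zero (natDegree_angularDeriv_le hQ.le) ?_
  rw [coeff_angularDeriv]
  refine mul_ne_zero ?_ ?_
  · push_cast
    ring_nf
    exact_mod_cast hn
  · rw [← hQ, coeff_natDegree, leadingCoeff_ne_zero]
    rintro rfl
    simp at hQ
    omega

theorem leadingCoeff_angularDeriv {n : ℕ} (hn : n ≠ 0) {Q : ℂ[X]} (hQ : Q.natDegree = 2 * n) :
    (angularDeriv n Q).leadingCoeff = n * Q.leadingCoeff := by
  rw [leadingCoeff, leadingCoeff, natDegree_angularDeriv hn hQ, hQ, coeff_angularDeriv]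
  push_cast
  ring

theorem half_lt_re_div_sub {z r : ℂ} (h : ‖r‖ < ‖z‖) : 1 / 2 < (z / (z - r)).re := by
  have hzr : z - r ≠ 0 := by
    intro h0
    rw [sub_eq_zero.1 h0] at h
    exact lt_irrefl _ h
  have hpos : 0 < Complex.normSq (z - r) := Complex.normSq_pos.2 hzr
  have h2 : Complex.normSq r < Complex.normSq z := by
    rw [Complex.normSq_eq_norm_sq, Complex.normSq_eq_norm_sq]
    gcongr
  rw [Complex.div_re, ← add_div, div_lt_div_iff₀ two_pos hpos]
  simp only [Complex.normSq_apply, Complex.sub_re, Complex.sub_im] at *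
  nlinarith

theorem eval_angularDeriv_ne_zero {n : ℕ} (hn : n ≠ 0) {Q : ℂ[X]} (hQ : Q.natDegree = 2 * n)
    (hroots : ∀ z : ℂ, 1 < ‖z‖ → Q.eval z ≠ 0) {z : ℂ} (hz : 1 < ‖z‖) :
    (angularDeriv n Q).eval z ≠ 0 := by
  intro h0
  have hQz := hroots z hz
  have hs := (IsAlgClosed.splits Q).eval_derivative_div_eval_of_ne_zero hQz
  have hcard : Multiset.card Q.roots = 2 * n := by
    rw [← hQ]; exact (IsAlgClosed.splits Q).natDegree_eq_card_roots.symm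
  have hle : ∀ r ∈ Q.roots, 1 / 2 < (z / (z - r)).re := by
    intro r hr
    refine half_lt_re_div_sub (lt_of_le_of_lt ?_ hz)
    by_contra! hr1
    exact hroots r hr1 (isRoot_of_mem_roots hr)
  have hsum : (n : ℂ) = (Q.roots.map fun r => z / (z - r)).sum := by
    have : (n : ℂ) = z * (Q.derivative.eval z / Q.eval z) := by
      simp [angularDeriv] at h0
      field_simp
      linear_combination -h0
    rw [this, hs, ← Multiset.sum_map_mul_left]
    simp [div_eq_mul_inv]
  have hre : (n : ℝ) = (Q.roots.map fun r => (z / (z - r)).re).sum := by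
    have := congrArg Complex.reAddGroupHom hsum
    rw [map_multiset_sum, Multiset.map_map] at this
    simpa [Function.comp_def] using this
  have hlt : (Q.roots.map fun _ => (1 / 2 : ℝ)).sum <
      (Q.roots.map fun r => (z / (z - r)).re).sum := by
    refine Multiset.sum_lt_sum_of_nonempty ?_ hle
    intro h
    rw [h] at hcard
    simp at hcard
    omega
  rw [← hre] at hlt
  simp [hcard] at hlt
  linarith

/-- The linear factor vanishing at `r`, replaced by its reflection in the unit circle
when `r` lies outside the closed unit disc. -/
def discFactor (r : ℂ) : ℂ[X] :=
  if ‖r‖ ≤ 1 then X - C r else C (-(starRingEnd ℂ r)) * X + C 1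

/-- Reflect the roots of `Q` outside the closed unit disc into the disc. -/
def discReflect (Q : ℂ[X]) : ℂ[X] := C Q.leadingCoeff * (Q.roots.map discFactor).prod

theorem norm_sub_le_norm_eval_discFactor {z : ℂ} (hz : 1 ≤ ‖z‖) (r : ℂ) :
    ‖z - r‖ ≤ ‖(discFactor r).eval z‖ := by
  unfold discFactor
  split_ifs with h
  · simp
  · push Not at h
    refine le_of_sq_le_sq ?_ (norm_nonneg _)
    have hz2 : 1 ≤ ‖z‖ ^ 2 := by nlinarith
    have hr2 : 1 ≤ ‖r‖ ^ 2 := by nlinarith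
    rw [← Complex.normSq_eq_norm_sq] at *
    rw [← Complex.normSq_eq_norm_sq]
    simp only [Complex.normSq_apply, eval_add, eval_mul, eval_C, eval_X, Complex.sub_re,
      Complex.sub_im, Complex.add_re, Complex.add_im, Complex.mul_re, Complex.mul_im,
      Complex.neg_re, Complex.neg_im, Complex.conj_re, Complex.conj_im, Complex.one_re,
      Complex.one_im] at *
    nlinarith [mul_nonneg (sub_nonneg.2 hz2) (sub_nonneg.2 hr2)]

theorem eval_discFactor_ne_zero {z : ℂ} (hz : 1 < ‖z‖) (r : ℂ) : (discFactor r).eval z ≠ 0 := by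
  unfold discFactor
  split_ifs with h
  · simp only [eval_sub, eval_X, eval_C, ne_eq, sub_eq_zero]
    rintro rfl
    exact hz.not_ge h
  · push Not at h
    simp only [eval_add, eval_mul, eval_C, eval_X]
    intro h0
    have h1 : starRingEnd ℂ r * z = 1 := by linear_combination -h0
    have h2 := congrArg norm h1
    simp only [norm_mul, RCLike.norm_conj, norm_one] at h2
    nlinarith

theorem natDegree_discFactor (r : ℂ) : (discFactor r).natDegree = 1 := by
  unfold discFactor
  split_ifs with h
  · simp
  · refine natDegree_linear ?_
    simp
    rintro rfl
    simp at h

theorem norm_leadingCoeff_discFactor (r : ℂ) : ‖(discFactor r).leadingCoeff‖ = max 1 ‖r‖ := by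
  unfold discFactor
  split_ifs with h
  · simp [h]
  · rw [leadingCoeff_linear]
    · push Not at h
      simp [h.le]
    · simp
      rintro rfl
      simp at h

theorem natDegree_discReflect (Q : ℂ[X]) : (discReflect Q).natDegree = Q.natDegree := by
  by_cases hQ : Q = 0
  · simp [hQ, discReflect]
  have hne : (0 : ℂ[X]) ∉ Q.roots.map discFactor := by
    rw [Multiset.mem_map]
    rintro ⟨r, -, hr⟩
    simpa [hr] using natDegree_discFactor r
  rw [discReflect, natDegree_C_mul (leadingCoeff_ne_zero.2 hQ), natDegree_multiset_prod _ hne,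
    Multiset.map_map]
  simp [natDegree_discFactor, (IsAlgClosed.splits Q).natDegree_eq_card_roots]

theorem norm_leadingCoeff_discReflect (Q : ℂ[X]) :
    ‖(discReflect Q).leadingCoeff‖ = Q.mahlerMeasure := by
  rw [discReflect, leadingCoeff_mul, leadingCoeff_multiset_prod, norm_mul,
    mahlerMeasure_eq_leadingCoeff_mul_prod_roots, leadingCoeff_C, Multiset.map_map]
  congr 1
  have := map_multiset_prod (normHom (α := ℂ))
    (Q.roots.map ((fun f : ℂ[X] => f.leadingCoeff) ∘ discFactor))
  rw [Multiset.map_map] at this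
  simpa [Function.comp_def, normHom, norm_leadingCoeff_discFactor] using this

theorem norm_eval_le_norm_eval_discReflect (Q : ℂ[X]) {z : ℂ} (hz : 1 ≤ ‖z‖) :
    ‖Q.eval z‖ ≤ ‖(discReflect Q).eval z‖ := by
  rw [(IsAlgClosed.splits Q).eval_eq_prod_roots, discReflect, eval_mul, eval_C,
    eval_multiset_prod, norm_mul, norm_mul, Multiset.map_map]
  gcongr
  induction Q.roots using Multiset.induction_on with
  | empty => simp
  | cons r s ih =>
    simp only [Multiset.map_cons, Multiset.prod_cons, norm_mul, Function.comp_apply]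
    exact mul_le_mul (norm_sub_le_norm_eval_discFactor hz r) ih (norm_nonneg _) (norm_nonneg _)

theorem eval_discReflect_ne_zero {Q : ℂ[X]} (hQ : Q ≠ 0) {z : ℂ} (hz : 1 < ‖z‖) :
    (discReflect Q).eval z ≠ 0 := by
  rw [discReflect, eval_mul, eval_C, eval_multiset_prod, Multiset.map_map]
  refine mul_ne_zero (leadingCoeff_ne_zero.2 hQ) (Multiset.prod_ne_zero ?_)
  rw [Multiset.mem_map]
  rintro ⟨r, -, hr⟩
  exact eval_discFactor_ne_zero hz r hr

theorem norm_eval_angularDeriv_le_of_one_lt {n : ℕ} (hn : n ≠ 0) {Q : ℂ[X]}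
    (hQ : Q.natDegree = 2 * n) {z : ℂ} (hz : 1 < ‖z‖) :
    ‖(angularDeriv n Q).eval z‖ ≤ ‖(angularDeriv n (discReflect Q)).eval z‖ := by
  have hQ0 : Q ≠ 0 := by
    rintro rfl
    simp at hQ
    omega
  have hR : (discReflect Q).natDegree = 2 * n := by rw [natDegree_discReflect, hQ]
  have hRz : (angularDeriv n (discReflect Q)).eval z ≠ 0 :=
    eval_angularDeriv_ne_zero hn hR (fun w hw => eval_discReflect_ne_zero hQ0 hw) hz
  by_contra! hlt
  set l := (angularDeriv n Q).eval z / (angularDeriv n (discReflect Q)).eval z with hl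
  have hl1 : 1 < ‖l‖ := by
    rw [hl, norm_div, one_lt_div (norm_pos_iff.2 hRz)]
    exact hlt
  have hdeg : (C l * discReflect Q - Q).natDegree = 2 * n := by
    refine natDegree_eq_of_le_of_coeff_ne_zero ?_ ?_
    · refine (natDegree_sub_le _ _).trans (max_le ?_ hQ.le)
      exact (natDegree_C_mul_le _ _).trans hR.le
    · rw [coeff_sub, coeff_C_mul, sub_ne_zero]
      intro h
      have h1 : l * (discReflect Q).leadingCoeff = Q.leadingCoeff := by
        rw [leadingCoeff, leadingCoeff, hR, hQ, h]
      have h2 := congrArg norm h1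
      rw [norm_mul, norm_leadingCoeff_discReflect] at h2
      have h3 := leadingCoeff_le_mahlerMeasure Q
      have h4 := mahlerMeasure_pos_of_ne_zero hQ0
      nlinarith
  refine eval_angularDeriv_ne_zero hn hdeg (fun w hw h => ?_) hz ?_
  · have h1 : l * (discReflect Q).eval w = Q.eval w := by
      simpa [sub_eq_zero] using h
    have h2 := congrArg norm h1
    rw [norm_mul] at h2
    have h3 := norm_eval_le_norm_eval_discReflect Q hw.le
    have h4 := norm_pos_iff.2 (eval_discReflect_ne_zero hQ0 hw)
    nlinarith
  · have : (angularDeriv n (C l * discReflect Q - Q)).eval z =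
        l * (angularDeriv n (discReflect Q)).eval z - (angularDeriv n Q).eval z := by
      simp [angularDeriv]
      ring
    rw [this, hl, div_mul_cancel₀ _ hRz, sub_self]

theorem norm_eval_angularDeriv_le {n : ℕ} (hn : n ≠ 0) {Q : ℂ[X]}
    (hQ : Q.natDegree = 2 * n) {z : ℂ} (hz : ‖z‖ = 1) :
    ‖(angularDeriv n Q).eval z‖ ≤ ‖(angularDeriv n (discReflect Q)).eval z‖ := by
  have hlim : ∀ R : ℂ[X], Filter.Tendsto (fun t : ℝ => ‖R.eval ((t : ℂ) * z)‖)
      (nhdsWithin 1 (Set.Ioi 1)) (nhds ‖R.eval z‖) := by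
    intro R
    have : Continuous fun t : ℝ => ‖R.eval ((t : ℂ) * z)‖ := by fun_prop
    simpa using (this.tendsto 1).mono_left nhdsWithin_le_nhds
  refine le_of_tendsto_of_tendsto (hlim _) (hlim _) ?_
  filter_upwards [self_mem_nhdsWithin] with t ht
  have ht' : (1 : ℝ) < t := ht
  refine norm_eval_angularDeriv_le_of_one_lt hn hQ ?_
  rw [norm_mul, hz, mul_one, Complex.norm_real]
  exact ht'.trans_le (le_abs_self t)

theorem mahlerMeasure_eq_norm_leadingCoeff {Q : ℂ[X]}
    (hroots : ∀ z : ℂ, 1 < ‖z‖ → Q.eval z ≠ 0) : Q.mahlerMeasure = ‖Q.leadingCoeff‖ := by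
  rw [mahlerMeasure_eq_leadingCoeff_mul_prod_roots]
  have : Q.roots.map (fun a => max 1 ‖a‖) = Q.roots.map fun _ => (1 : ℝ) := by
    refine Multiset.map_congr rfl fun r hr => max_eq_left ?_
    by_contra! h
    exact hroots r h (isRoot_of_mem_roots hr)
  simp [this]

theorem circleIntegrable_log_norm_eval (Q : ℂ[X]) :
    CircleIntegrable (fun z => log ‖Q.eval z‖) 0 1 :=
  (circleIntegrable_def _ _ _).2 Q.intervalIntegrable_mahlerMeasure

/-- Bernstein's inequality for the Mahler measure. -/
theorem logMahlerMeasure_angularDeriv_le {n : ℕ} (hn : n ≠ 0) {Q : ℂ[X]}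
    (hQ : Q.natDegree = 2 * n) :
    (angularDeriv n Q).logMahlerMeasure ≤ log n + Q.logMahlerMeasure := by
  have hQ0 : Q ≠ 0 := by
    rintro rfl
    simp at hQ
    omega
  have hD0 : angularDeriv n Q ≠ 0 := by
    intro h
    have := natDegree_angularDeriv hn hQ
    rw [h] at this
    simp at this
    omega
  have hR : (discReflect Q).natDegree = 2 * n := by rw [natDegree_discReflect, hQ]
  calc (angularDeriv n Q).logMahlerMeasure
      ≤ (angularDeriv n (discReflect Q)).logMahlerMeasure := by
        refine circleAverage_le_of_forall_notMem (S := (angularDeriv n Q).roots.toFinset)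
          (Finset.finite_toSet _) (circleIntegrable_log_norm_eval _)
          (circleIntegrable_log_norm_eval _) fun z hz hzS => ?_
        have hz0 : (angularDeriv n Q).eval z ≠ 0 := by simpa [hD0] using hzS
        exact log_le_log (norm_pos_iff.2 hz0) (norm_eval_angularDeriv_le hn hQ hz)
    _ = log n + Q.logMahlerMeasure := by
        rw [logMahlerMeasure_eq_log_MahlerMeasure, logMahlerMeasure_eq_log_MahlerMeasure,
          mahlerMeasure_eq_norm_leadingCoeff, leadingCoeff_angularDeriv hn hR, norm_mul,
          norm_leadingCoeff_discReflect, log_mul, Complex.norm_natCast]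
        · simpa using hn
        · exact (mahlerMeasure_pos_of_ne_zero hQ0).ne'
        · intro z hz
          exact eval_angularDeriv_ne_zero hn hR (fun w hw => eval_discReflect_ne_zero hQ0 hw) hz

/-- The circle average of `log⁺ ‖Q‖` is the average of the logarithmic Mahler measures of
`Q - a X ^ m` over the unit circle. -/
theorem circleAverage_posLog_norm_eval (Q : ℂ[X]) (m : ℕ) :
    circleAverage (fun a => (Q - C a * X ^ m).logMahlerMeasure) 0 1 =
      circleAverage (fun z => log⁺ ‖Q.eval z‖) 0 1 ∧
    CircleIntegrable (fun a => (Q - C a * X ^ m).logMahlerMeasure) 0 1 := by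
  have hmer : Meromorphic fun z : ℂ => Q.eval z / z ^ m := by
    intro z
    have h1 : AnalyticAt ℂ (fun z : ℂ => Q.eval z) z :=
      Q.differentiable.analyticAt z
    exact h1.meromorphicAt.div (by fun_prop)
  have hlog : ∀ a : ℂ, circleAverage (fun z => log ‖Q.eval z / z ^ m - a‖) 0 1 =
      (Q - C a * X ^ m).logMahlerMeasure := by
    intro a
    refine circleAverage_congr_sphere fun z hz => ?_
    have hz1 : ‖z‖ = 1 := by simpa using hz
    have hz0 : z ≠ 0 := by
      rintro rfl
      simp at hz1
    have : Q.eval z / z ^ m - a = (Q.eval z - a * z ^ m) / z ^ m := by field_simp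
    simp [this, hz1]
  have h1 := congrFun (ValueDistribution.circleAverage_circleAverage_eq_proximity_top hmer) 1
  have h2 := ValueDistribution.circleIntegrable_circleAverage_log_norm_sub (R := 1) hmer
  simp only [hlog] at h1 h2
  refine ⟨h1.trans ?_, h2⟩
  rw [ValueDistribution.proximity_top]
  refine circleAverage_congr_sphere fun z hz => ?_
  have hz1 : ‖z‖ = 1 := by simpa using hz
  simp [hz1]

theorem circleAverage_posLog_angularDeriv_le {n : ℕ} (hn : n ≠ 0) {Q : ℂ[X]}
    (hQ : Q.natDegree ≤ 2 * n) :
    circleAverage (fun z => log⁺ (‖(angularDeriv n Q).eval z‖ / n)) 0 1 ≤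
      circleAverage (fun z => log⁺ ‖Q.eval z‖) 0 1 := by
  have hnC : (n : ℂ) ≠ 0 := by exact_mod_cast hn
  obtain ⟨h1, h1'⟩ := circleAverage_posLog_norm_eval Q (2 * n)
  obtain ⟨h2, h2'⟩ := circleAverage_posLog_norm_eval (C (n : ℂ)⁻¹ * angularDeriv n Q) (2 * n)
  have h3 : ∀ z, ‖(C (n : ℂ)⁻¹ * angularDeriv n Q).eval z‖ = ‖(angularDeriv n Q).eval z‖ / n := by
    intro z
    simp [div_eq_inv_mul]
  simp only [h3] at h2
  rw [← h1, ← h2]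
  refine circleAverage_le_of_forall_notMem (Set.finite_singleton (Q.coeff (2 * n))) h2' h1'
    fun a _ ha => ?_
  have hdeg : (Q - C a * X ^ (2 * n)).natDegree = 2 * n := by
    refine natDegree_eq_of_le_of_coeff_ne_zero ?_ ?_
    · exact (natDegree_sub_le _ _).trans (max_le hQ (natDegree_C_mul_X_pow_le _ _))
    · simpa [sub_eq_zero, eq_comm (a := a)] using ha
  have hD : C (n : ℂ)⁻¹ * angularDeriv n Q - C a * X ^ (2 * n) =
      C (n : ℂ)⁻¹ * angularDeriv n (Q - C a * X ^ (2 * n)) := by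
    ext m
    simp only [coeff_sub, coeff_C_mul, coeff_angularDeriv, coeff_X_pow]
    split_ifs with h
    · subst h
      push_cast
      field_simp
      ring
    · ring
  have hD0 : angularDeriv n (Q - C a * X ^ (2 * n)) ≠ 0 := by
    intro h
    have := natDegree_angularDeriv hn hdeg
    rw [h] at this
    simp at this
    omega
  rw [hD, logMahlerMeasure_C_mul (inv_ne_zero hnC) hD0]
  have := logMahlerMeasure_angularDeriv_le hn hdeg
  simp only [norm_inv, Complex.norm_natCast, log_inv]
  linarith

end AngularDeriv

section LpBernstein

/-- The mass of the kernel `max(-s, 0) e^{ps}`. -/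
noncomputable def posLogMass (p : ℝ) : ENNReal :=
  ∫⁻ s : ℝ, ENNReal.ofReal (log⁺ (exp (-s)) * exp (p * s))

theorem lintegral_posLog_mul_exp {p : ℝ} (hp : 0 < p) {u : ℝ} (hu : 0 ≤ u) :
    ∫⁻ s : ℝ, ENNReal.ofReal (log⁺ (exp (-s) * u) * exp (p * s)) =
      posLogMass p * ENNReal.ofReal (u ^ p) := by
  rcases hu.eq_or_lt with rfl | hu
  · simp [zero_rpow hp.ne']
  rw [← lintegral_add_right_eq_self _ (log u), posLogMass, ← lintegral_mul_const]
  · refine lintegral_congr fun s => ?_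
    rw [← ENNReal.ofReal_mul (mul_nonneg posLog_nonneg (exp_nonneg _))]
    congr 1
    rw [neg_add, exp_add, mul_assoc, exp_neg (log u), exp_log hu, inv_mul_cancel₀ hu.ne', mul_one,
      mul_add, exp_add, rpow_def_of_pos hu, mul_comm p (log u), mul_assoc]
  · fun_prop

theorem posLogMass_ne_zero (p : ℝ) : posLogMass p ≠ 0 := by
  refine ((lintegral_pos_iff_support (by fun_prop)).2 ?_).ne'
  refine lt_of_lt_of_le (by simp) (measure_mono (s := Set.Iio (0 : ℝ)) fun s hs => ?_)
  have hs' : s < 0 := hs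
  have h1 : 0 < log⁺ (exp (-s)) := by
    simp [posLog_apply, log_exp, hs']
  simp only [Function.mem_support, ne_eq, ENNReal.ofReal_eq_zero, not_le]
  positivity

theorem posLogMass_ne_top {p : ℝ} (hp : 0 < p) : posLogMass p ≠ ⊤ := by
  have hexp : Integrable (Set.indicator (Set.Iic (0 : ℝ)) fun s => 2 / p * exp (p / 2 * s)) :=
    (integrable_indicator_iff measurableSet_Iic).2
      ((integrableOn_exp_mul_Iic (half_pos hp) 0).const_mul (2 / p))
  refine ne_top_of_le_ne_top hexp.lintegral_lt_top.ne (lintegral_mono fun s => ?_)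
  refine ENNReal.ofReal_le_ofReal ?_
  by_cases hs : s ≤ 0
  · rw [Set.indicator_of_mem (by exact hs)]
    have h1 : log⁺ (exp (-s)) = -s := by simp [posLog_apply, log_exp, hs]
    have h2 : -s ≤ 2 / p * exp (-(p / 2 * s)) := by
      have := add_one_le_exp (-(p / 2 * s))
      rw [div_mul_eq_mul_div, le_div_iff₀ hp]
      linarith
    calc log⁺ (exp (-s)) * exp (p * s) ≤ 2 / p * exp (-(p / 2 * s)) * exp (p * s) := by
          rw [h1]
          gcongr
      _ = 2 / p * exp (p / 2 * s) := by
          rw [mul_assoc, ← exp_add]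
          ring_nf
  · rw [Set.indicator_of_notMem (by exact hs)]
    have h1 : log⁺ (exp (-s)) = 0 := by
      simp [posLog_apply, log_exp, (not_le.1 hs).le]
    simp [h1]

/-- An inequality between the integrals of `log⁺ (f / a)` and `log⁺ (g / a)` for all `a > 0`
gives one between the `L^p` norms. -/
theorem lintegral_rpow_le_of_posLog {α : Type*} [MeasurableSpace α] {μ : Measure α} [SFinite μ]
    {f g : α → ℝ} (hf : Measurable f) (hg : Measurable g) (hf0 : ∀ x, 0 ≤ f x)
    (hg0 : ∀ x, 0 ≤ g x)
    (h : ∀ s : ℝ, ∫⁻ x, ENNReal.ofReal (log⁺ (exp (-s) * f x)) ∂μ ≤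
      ∫⁻ x, ENNReal.ofReal (log⁺ (exp (-s) * g x)) ∂μ) {p : ℝ} (hp : 0 < p) :
    ∫⁻ x, ENNReal.ofReal (f x ^ p) ∂μ ≤ ∫⁻ x, ENNReal.ofReal (g x ^ p) ∂μ := by
  have key : ∀ u : α → ℝ, Measurable u → (∀ x, 0 ≤ u x) →
      posLogMass p * ∫⁻ x, ENNReal.ofReal (u x ^ p) ∂μ =
        ∫⁻ s : ℝ, (∫⁻ x, ENNReal.ofReal (log⁺ (exp (-s) * u x)) ∂μ) *
          ENNReal.ofReal (exp (p * s)) := by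
    intro u hu hu0
    rw [← lintegral_const_mul _ (by fun_prop)]
    simp_rw [← lintegral_posLog_mul_exp hp (hu0 _)]
    rw [lintegral_lintegral_swap]
    · refine lintegral_congr fun s => ?_
      rw [← lintegral_mul_const _ (by fun_prop)]
      refine lintegral_congr fun x => ?_
      rw [ENNReal.ofReal_mul posLog_nonneg]
    · refine Measurable.aemeasurable ?_
      simp only [Function.uncurry_def]
      fun_prop
  rw [← ENNReal.mul_le_mul_iff_right (posLogMass_ne_zero p) (posLogMass_ne_top hp),
    key f hf hf0, key g hg hg0]
  exact lintegral_mono fun s => mul_le_mul' (h s) le_rfl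

open Polynomial in
theorem lintegral_posLog_circleMap (Q : ℂ[X]) (c : ℝ) :
    ∫⁻ θ in Set.Ioc 0 (2 * π), ENNReal.ofReal (log⁺ (‖Q.eval (circleMap 0 1 θ)‖ * c)) =
      ENNReal.ofReal (2 * π * circleAverage (fun z => log⁺ (‖Q.eval z‖ * c)) 0 1) := by
  rw [circleAverage_def, smul_eq_mul, mul_inv_cancel_left₀ two_pi_pos.ne',
    intervalIntegral.integral_of_le two_pi_pos.le, ofReal_integral_eq_lintegral_ofReal]
  · have : Continuous fun θ => log⁺ (‖Q.eval (circleMap 0 1 θ)‖ * c) := by fun_prop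
    exact (this.integrableOn_Icc).mono_set Set.Ioc_subset_Icc_self
  · exact Filter.Eventually.of_forall fun _ => posLog_nonneg

open Polynomial in
/-- Arestov's form of Bernstein's inequality in `L^p`, for all `p > 0`. -/
theorem lintegral_rpow_angularDeriv_le {n : ℕ} (hn : n ≠ 0) {Q : ℂ[X]}
    (hQ : Q.natDegree ≤ 2 * n) {p : ℝ} (hp : 0 < p) :
    ∫⁻ θ in Set.Ioc 0 (2 * π), ENNReal.ofReal (‖(angularDeriv n Q).eval (circleMap 0 1 θ)‖ ^ p) ≤
      ENNReal.ofReal ((n : ℝ) ^ p) *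
        ∫⁻ θ in Set.Ioc 0 (2 * π), ENNReal.ofReal (‖Q.eval (circleMap 0 1 θ)‖ ^ p) := by
  have hn0 : (0 : ℝ) < n := by positivity
  have hm : ∀ R : ℂ[X], Measurable fun θ => ‖R.eval (circleMap 0 1 θ)‖ := fun R =>
    Continuous.measurable (by fun_prop)
  have h := lintegral_rpow_le_of_posLog (μ := volume.restrict (Set.Ioc 0 (2 * π)))
    (f := fun θ => ‖(angularDeriv n Q).eval (circleMap 0 1 θ)‖ * (n : ℝ)⁻¹)
    (g := fun θ => ‖Q.eval (circleMap 0 1 θ)‖) ((hm _).mul_const _) (hm _)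
    (fun _ => by positivity) (fun _ => by positivity) ?_ hp
  · calc _ = ∫⁻ θ in Set.Ioc 0 (2 * π), ENNReal.ofReal ((n : ℝ) ^ p) * ENNReal.ofReal
          ((‖(angularDeriv n Q).eval (circleMap 0 1 θ)‖ * (n : ℝ)⁻¹) ^ p) := by
          refine lintegral_congr fun θ => ?_
          rw [← ENNReal.ofReal_mul (by positivity), ← mul_rpow hn0.le (by positivity)]
          congr 2
          field_simp
      _ = ENNReal.ofReal ((n : ℝ) ^ p) * ∫⁻ θ in Set.Ioc 0 (2 * π), ENNReal.ofReal
          ((‖(angularDeriv n Q).eval (circleMap 0 1 θ)‖ * (n : ℝ)⁻¹) ^ p) :=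
          lintegral_const_mul' _ _ ENNReal.ofReal_ne_top
      _ ≤ _ := by gcongr
  · intro s
    have h1 := circleAverage_posLog_angularDeriv_le hn (Q := C (exp (-s) : ℂ) * Q)
      ((natDegree_C_mul_le _ _).trans hQ)
    have h2 : angularDeriv n (C (exp (-s) : ℂ) * Q) = C (exp (-s) : ℂ) * angularDeriv n Q := by
      simp only [angularDeriv, derivative_C_mul]
      ring
    have h3 : ∀ (R : ℂ[X]) z, ‖(C (exp (-s) : ℂ) * R).eval z‖ = ‖R.eval z‖ * exp (-s) := by
      intro R z
      rw [eval_mul, eval_C, norm_mul, mul_comm, Complex.norm_real, norm_of_nonneg (exp_nonneg _)]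
    simp only [h2, h3, div_eq_mul_inv, mul_assoc] at h1
    have e1 := lintegral_posLog_circleMap (angularDeriv n Q)
      (exp (-s) * (n : ℝ)⁻¹)
    have e2 := lintegral_posLog_circleMap Q (exp (-s))
    simp only [mul_left_comm (exp (-s)), mul_comm (exp (-s))] at e1 e2 h1 ⊢
    simp only [mul_assoc] at e1 e2 h1 ⊢
    rw [e1, e2]
    gcongr

end LpBernstein

section TrigPoly

open Polynomial

/-- `T` is a (complex) trigonometric polynomial of degree at most `n`. -/
def IsTrigPoly (n : ℕ) (T : ℝ → ℂ) : Prop :=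
  ∃ Q : ℂ[X], Q.natDegree ≤ 2 * n ∧
    ∀ θ, Q.eval (circleMap 0 1 θ) = circleMap 0 1 θ ^ n * T θ

theorem IsTrigPoly.mono {n m : ℕ} {T : ℝ → ℂ} (h : IsTrigPoly n T) (hnm : n ≤ m) :
    IsTrigPoly m T := by
  obtain ⟨Q, hQ, hT⟩ := h
  refine ⟨X ^ (m - n) * Q, ?_, fun θ => ?_⟩
  · refine natDegree_mul_le.trans ?_
    rw [natDegree_X_pow]
    omega
  · rw [eval_mul, eval_pow, eval_X, hT, ← mul_assoc, ← pow_add, Nat.sub_add_cancel hnm]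

theorem isTrigPoly_const (c : ℂ) : IsTrigPoly 0 fun _ => c :=
  ⟨C c, by simp, by simp⟩

theorem IsTrigPoly.mul {n m : ℕ} {S T : ℝ → ℂ} (hS : IsTrigPoly n S) (hT : IsTrigPoly m T) :
    IsTrigPoly (n + m) fun θ => S θ * T θ := by
  obtain ⟨Q, hQ, hS⟩ := hS
  obtain ⟨R, hR, hT⟩ := hT
  refine ⟨Q * R, natDegree_mul_le.trans (by omega), fun θ => ?_⟩
  rw [eval_mul, hS, hT]
  ring

theorem IsTrigPoly.pow {n : ℕ} {T : ℝ → ℂ} (hT : IsTrigPoly n T) (m : ℕ) :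
    IsTrigPoly (m * n) fun θ => T θ ^ m := by
  induction m with
  | zero => simpa using isTrigPoly_const 1
  | succ m ih => simpa only [pow_succ, Nat.succ_mul] using ih.mul hT

theorem IsTrigPoly.sum {ι : Type*} {s : Finset ι} {n : ℕ} {T : ι → ℝ → ℂ}
    (h : ∀ i ∈ s, IsTrigPoly n (T i)) : IsTrigPoly n fun θ => ∑ i ∈ s, T i θ := by
  choose! Q hQ hT using h
  refine ⟨∑ i ∈ s, Q i, natDegree_sum_le_of_forall_le s Q hQ, fun θ => ?_⟩
  rw [eval_finsetSum, Finset.mul_sum]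
  exact Finset.sum_congr rfl fun i hi => hT i hi θ

theorem IsTrigPoly.prod {ι : Type*} {s : Finset ι} {n : ι → ℕ} {T : ι → ℝ → ℂ}
    (h : ∀ i ∈ s, IsTrigPoly (n i) (T i)) :
    IsTrigPoly (∑ i ∈ s, n i) fun θ => ∏ i ∈ s, T i θ := by
  classical
  induction s using Finset.induction_on with
  | empty => simpa using isTrigPoly_const 1
  | insert i s hi ih =>
    simp only [Finset.prod_insert hi, Finset.sum_insert hi]
    exact (h i (by simp)).mul (ih fun j hj => h j (by simp [hj]))

theorem isTrigPoly_cos_sin (x y : ℝ) :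
    IsTrigPoly 1 fun θ => ((cos θ * x + sin θ * y : ℝ) : ℂ) := by
  refine ⟨C ((x - Complex.I * y) / 2) * X ^ 2 + C ((x + Complex.I * y) / 2), ?_, fun θ => ?_⟩
  · refine (natDegree_add_le _ _).trans (max_le (natDegree_C_mul_X_pow_le _ _) (by simp))
  · have h1 : circleMap 0 1 θ = cos θ + sin θ * Complex.I := by
      simp [circleMap, Complex.exp_mul_I]
    simp only [eval_add, eval_mul, eval_C, eval_pow, eval_X, h1, pow_one]
    push_cast
    linear_combination (-x / 2 - Complex.I * y / 2 : ℂ) * Complex.cos_sq_add_sin_sq θ +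
      (x * Complex.sin θ ^ 2 / 2 - y * Complex.cos θ * Complex.sin θ -
        Complex.I * y * Complex.sin θ ^ 2 / 2) * Complex.I_sq

/-- The restriction of a polynomial to a centered ellipse is a trigonometric polynomial. -/
theorem isTrigPoly_eval {k : ℕ} (P : MvPolynomial (Fin k) ℝ) (x y : Fin k → ℝ) :
    IsTrigPoly P.totalDegree
      fun θ => ((MvPolynomial.eval (cos θ • x + sin θ • y) P : ℝ) : ℂ) := by
  simp only [MvPolynomial.eval_eq', Complex.ofReal_sum, Complex.ofReal_mul, Complex.ofReal_prod,
    Complex.ofReal_pow]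
  refine IsTrigPoly.sum fun d hd => ?_
  have hdeg : ∑ i, d i * 1 ≤ P.totalDegree := by
    have := MvPolynomial.le_totalDegree hd
    rw [Finsupp.sum_fintype _ _ (fun _ => rfl)] at this
    simpa using this
  have h := (isTrigPoly_const ((MvPolynomial.coeff d P : ℝ) : ℂ)).mul
    (IsTrigPoly.prod (s := Finset.univ) (n := fun i => d i * 1)
      fun i _ => (isTrigPoly_cos_sin (x i) (y i)).pow (d i))
  exact h.mono (by omega)

/-- The derivative of a polynomial at `x` in the direction `v`. -/
noncomputable def dirDeriv {k : ℕ} (P : MvPolynomial (Fin k) ℝ) (x v : Fin k → ℝ) : ℝ :=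
  ∑ j, MvPolynomial.eval x (MvPolynomial.pderiv j P) * v j

theorem hasDerivAt_eval_comp {k : ℕ} (P : MvPolynomial (Fin k) ℝ) {c : ℝ → Fin k → ℝ}
    {v : Fin k → ℝ} {t : ℝ} (hc : HasDerivAt c v t) :
    HasDerivAt (fun s => MvPolynomial.eval (c s) P) (dirDeriv P (c t) v) t := by
  classical
  induction P using MvPolynomial.induction_on with
  | C a => simpa [dirDeriv] using hasDerivAt_const t a
  | add p q hp hq =>
    simpa only [dirDeriv, map_add, add_mul, Finset.sum_add_distrib] using hp.fun_add hq
  | mul_X p i hp =>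
    have hi : HasDerivAt (fun s => c s i) (v i) t := hasDerivAt_pi.1 hc i
    simp only [map_mul, MvPolynomial.eval_X]
    refine (hp.fun_mul hi).congr_deriv ?_
    simp only [dirDeriv, Derivation.leibniz, MvPolynomial.pderiv_X, smul_eq_mul, map_add, map_mul,
      MvPolynomial.eval_X, add_mul, Finset.sum_add_distrib, Pi.single_apply, apply_ite, map_zero,
      mul_one, mul_zero, ite_mul, zero_mul, Finset.sum_ite_eq, Finset.mem_univ, if_true,
      Finset.sum_mul]
    rw [add_comm]
    congr 1
    exact Finset.sum_congr rfl fun j _ => by ring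

/-- Bernstein's inequality on a centered ellipse. -/
theorem lintegral_rpow_dirDeriv_ellipse_le {k : ℕ} (P : MvPolynomial (Fin k) ℝ)
    (hP : P.totalDegree ≠ 0) (x y : Fin k → ℝ) {p : ℝ} (hp : 0 < p) :
    ∫⁻ θ in Set.Ioc 0 (2 * π), ENNReal.ofReal
        (|dirDeriv P (cos θ • x + sin θ • y) (-sin θ • x + cos θ • y)| ^ p) ≤
      ENNReal.ofReal ((P.totalDegree : ℝ) ^ p) * ∫⁻ θ in Set.Ioc 0 (2 * π),
        ENNReal.ofReal (|MvPolynomial.eval (cos θ • x + sin θ • y) P| ^ p) := by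
  obtain ⟨Q, hQ, hT⟩ := isTrigPoly_eval P x y
  beta_reduce at hT
  have h1 : ∀ θ, |MvPolynomial.eval (cos θ • x + sin θ • y) P| =
      ‖Q.eval (circleMap 0 1 θ)‖ := by
    intro θ
    simp [hT]
  have h2 : ∀ θ, |dirDeriv P (cos θ • x + sin θ • y) (-sin θ • x + cos θ • y)| =
      ‖(angularDeriv P.totalDegree Q).eval (circleMap 0 1 θ)‖ := by
    intro θ
    set n := P.totalDegree
    set z := circleMap 0 1 θ with hz
    set D := dirDeriv P (cos θ • x + sin θ • y) (-sin θ • x + cos θ • y) with hD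
    have hc : HasDerivAt (fun t : ℝ => cos t • x + sin t • y) (-sin θ • x + cos θ • y) θ :=
      ((hasDerivAt_cos θ).smul_const x).add ((hasDerivAt_sin θ).smul_const y)
    have d1 := (hasDerivAt_eval_comp P hc).ofReal_comp
    have dz : HasDerivAt (circleMap 0 1) (z * Complex.I) θ := hasDerivAt_circleMap 0 1 θ
    have d2 := (dz.fun_pow n).fun_mul d1
    have d3 : HasDerivAt (fun t => Q.eval (circleMap 0 1 t))
        (Q.derivative.eval z * (z * Complex.I)) θ :=
      (HasDerivAt.scomp_of_eq (g₁ := fun w => Q.eval w) θ (Q.hasDerivAt z) dz rfl).congr_deriv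
        (by rw [smul_eq_mul, mul_comm])
    have d4 := d3.unique (by simpa only [funext hT] using d2)
    have hz1 : ‖z‖ = 1 := by simp [hz]
    have hpow : (n : ℂ) * z ^ (n - 1) * z = n * z ^ n := by
      rw [mul_assoc, pow_sub_one_mul hP]
    have key : z ^ n * (D : ℂ) = Complex.I * (angularDeriv n Q).eval z := by
      simp only [angularDeriv, eval_sub, eval_mul, eval_X, eval_C]
      simp only [← hz, ← hD] at d4 ⊢
      linear_combination -d4 - Complex.I * (MvPolynomial.eval (cos θ • x + sin θ • y) P : ℝ) * hpow +
        Complex.I * n * hT θ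
    have := congrArg norm key
    simpa [hz1] using this
  simp only [h1, h2]
  exact lintegral_rpow_angularDeriv_le hP hQ hp

end TrigPoly

section Gaussian

instance (k : ℕ) : IsProbabilityMeasure (gaussMeasure k) :=
  inferInstanceAs (IsProbabilityMeasure (Measure.pi fun _ => gaussianReal 0 1))

theorem map_toLp_gaussMeasure (k : ℕ) :
    (gaussMeasure k).map (WithLp.toLp 2) = stdGaussian (EuclideanSpace ℝ (Fin k)) :=
  map_pi_eq_stdGaussian

theorem gaussMeasure_eq_map_stdGaussian (k : ℕ) :
    gaussMeasure k = (stdGaussian (EuclideanSpace ℝ (Fin k))).map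
      (EuclideanSpace.equiv (Fin k) ℝ) := by
  rw [← map_toLp_gaussMeasure, Measure.map_map (by fun_prop) (by fun_prop)]
  exact Measure.map_id.symm

instance (k : ℕ) : IsGaussian (gaussMeasure k) := by
  rw [gaussMeasure_eq_map_stdGaussian]
  infer_instance

theorem integral_strongDual_gaussMeasure {k : ℕ} (L : StrongDual ℝ (Fin k → ℝ)) :
    ∫ x, L x ∂(gaussMeasure k) = 0 := by
  rw [gaussMeasure_eq_map_stdGaussian, integral_map (by fun_prop) (by fun_prop)]
  exact integral_strongDual_stdGaussian
    (L ∘L (EuclideanSpace.equiv (Fin k) ℝ : EuclideanSpace ℝ (Fin k) →L[ℝ] (Fin k → ℝ)))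

theorem measurePreserving_rotation_gaussMeasure (k : ℕ) (θ : ℝ) :
    MeasurePreserving
      (fun z : (Fin k → ℝ) × (Fin k → ℝ) =>
        (cos θ • z.1 + sin θ • z.2, -sin θ • z.1 + cos θ • z.2))
      ((gaussMeasure k).prod (gaussMeasure k)) ((gaussMeasure k).prod (gaussMeasure k)) := by
  refine ⟨by fun_prop, ?_⟩
  have h := IsGaussian.map_rotation_eq_self_of_forall_strongDual_eq_zero
    (μ := gaussMeasure k) integral_strongDual_gaussMeasure θ
  convert h using 2
  ext1 z
  rw [ContinuousLinearMap.rotation_apply]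

/-- A linear form `⟨a, ·⟩` of a standard Gaussian vector is distributed as `|a|` times a standard
Gaussian variable. -/
theorem lintegral_rpow_abs_sum_mul_gaussMeasure {k : ℕ} (a : Fin k → ℝ) (p : ℝ) :
    ∫⁻ y, ENNReal.ofReal (|∑ j, a j * y j| ^ p) ∂(gaussMeasure k) =
      ENNReal.ofReal (√(∑ j, a j ^ 2) ^ p) *
        ∫⁻ t, ENNReal.ofReal (|t| ^ p) ∂(gaussianReal 0 1) := by
  have hL : (gaussMeasure k).map (fun y => ∑ j, a j * y j) =
      (gaussianReal 0 1).map (√(∑ j, a j ^ 2) * ·) := by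
    have h1 : (fun y : Fin k → ℝ => ∑ j, a j * y j) =
        innerSL ℝ (WithLp.toLp 2 a : EuclideanSpace ℝ (Fin k)) ∘ WithLp.toLp 2 := by
      ext y
      simp [PiLp.inner_apply, mul_comm]
    rw [h1, ← Measure.map_map (by fun_prop) (by fun_prop), map_toLp_gaussMeasure,
      IsGaussian.map_eq_gaussianReal, variance_dual_stdGaussian, integral_strongDual_stdGaussian,
      gaussianReal_map_const_mul, mul_zero, mul_one, innerSL_apply_norm, EuclideanSpace.norm_eq]
    congr 1
    ext
    simp
  calc _ = ∫⁻ t, ENNReal.ofReal (|t| ^ p) ∂((gaussMeasure k).map fun y => ∑ j, a j * y j) := by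
        rw [lintegral_map (by fun_prop) (by fun_prop)]
    _ = _ := by
        rw [hL, lintegral_map (by fun_prop) (by fun_prop),
          ← lintegral_const_mul _ (by fun_prop)]
        refine lintegral_congr fun t => ?_
        rw [abs_mul, abs_of_nonneg (sqrt_nonneg _), mul_rpow (sqrt_nonneg _) (abs_nonneg _),
          ENNReal.ofReal_mul (by positivity)]

theorem memLp_eval_gaussMeasure {k : ℕ} (P : MvPolynomial (Fin k) ℝ) :
    ∀ q : ENNReal, q ≠ ⊤ → MemLp (fun x => MvPolynomial.eval x P) q (gaussMeasure k) := by
  induction P using MvPolynomial.induction_on with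
  | C a => intro q _; simpa using memLp_const a
  | add P Q hP hQ =>
    intro q hq
    simp only [map_add]
    exact (hP q hq).add (hQ q hq)
  | mul_X P i hP =>
    intro q hq
    have h2q : 2 * q ≠ ⊤ := ENNReal.mul_ne_top (by simp) hq
    have hi : MemLp (fun x : Fin k → ℝ => x i) (2 * q) (gaussMeasure k) :=
      IsGaussian.memLp_dual (gaussMeasure k) (ContinuousLinearMap.proj i) _ h2q
    have : ENNReal.HolderTriple (2 * q) (2 * q) q := ⟨by
      rw [ENNReal.mul_inv (by simp) (by simp), ← add_mul, ENNReal.inv_two_add_inv_two, one_mul]⟩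
    simp only [map_mul, MvPolynomial.eval_X]
    exact hi.mul (hP _ h2q)

theorem integrable_rpow_abs_eval_gaussMeasure {k : ℕ} (P : MvPolynomial (Fin k) ℝ) {p : ℝ}
    (hp : 0 < p) :
    Integrable (fun x => |MvPolynomial.eval x P| ^ p) (gaussMeasure k) := by
  have := (memLp_eval_gaussMeasure P (ENNReal.ofReal p) ENNReal.ofReal_ne_top).integrable_norm_rpow
    (by simpa using hp) ENNReal.ofReal_ne_top
  simpa [ENNReal.toReal_ofReal hp.le] using this

theorem measurable_rpow_abs_dirDeriv {k : ℕ} (P : MvPolynomial (Fin k) ℝ) (p : ℝ) :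
    Measurable fun z : (Fin k → ℝ) × (Fin k → ℝ) =>
      ENNReal.ofReal (|dirDeriv P z.1 z.2| ^ p) := by
  have : Continuous fun z : (Fin k → ℝ) × (Fin k → ℝ) => dirDeriv P z.1 z.2 :=
    continuous_finsetSum _ fun j _ =>
      ((MvPolynomial.continuous_eval _).comp continuous_fst).mul (by fun_prop)
  have := this.measurable
  fun_prop

theorem lintegral_rpow_dirDeriv_gaussMeasure_le {k : ℕ} (P : MvPolynomial (Fin k) ℝ)
    (hP : P.totalDegree ≠ 0) {p : ℝ} (hp : 0 < p) :
    ∫⁻ z, ENNReal.ofReal (|dirDeriv P z.1 z.2| ^ p) ∂((gaussMeasure k).prod (gaussMeasure k)) ≤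
      ENNReal.ofReal ((P.totalDegree : ℝ) ^ p) *
        ∫⁻ x, ENNReal.ofReal (|MvPolynomial.eval x P| ^ p) ∂(gaussMeasure k) := by
  set γ := gaussMeasure k
  set R : ℝ → (Fin k → ℝ) × (Fin k → ℝ) → (Fin k → ℝ) × (Fin k → ℝ) := fun θ z =>
    (cos θ • z.1 + sin θ • z.2, -sin θ • z.1 + cos θ • z.2)
  have hRm : Measurable fun q : ℝ × (Fin k → ℝ) × (Fin k → ℝ) => R q.1 q.2 :=
    Continuous.measurable (by fun_prop)
  have avg : ∀ F : (Fin k → ℝ) × (Fin k → ℝ) → ENNReal, Measurable F →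
      ∫⁻ z, (∫⁻ θ in Set.Ioc 0 (2 * π), F (R θ z)) ∂(γ.prod γ) =
        (∫⁻ z, F z ∂(γ.prod γ)) * volume (Set.Ioc 0 (2 * π)) := by
    intro F hF
    rw [lintegral_lintegral_swap (f := fun z θ => F (R θ z))
      (hF.comp (hRm.comp measurable_swap)).aemeasurable]
    have hinv : ∀ θ, ∫⁻ z, F (R θ z) ∂(γ.prod γ) = ∫⁻ z, F z ∂(γ.prod γ) := fun θ =>
      (measurePreserving_rotation_gaussMeasure k θ).lintegral_comp hF
    simp only [hinv, lintegral_const, Measure.restrict_apply_univ]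
  have hF := measurable_rpow_abs_dirDeriv P p
  have hG : Measurable fun x : Fin k → ℝ => ENNReal.ofReal (|MvPolynomial.eval x P| ^ p) := by
    have := (MvPolynomial.continuous_eval P).measurable
    fun_prop
  have h0 : volume (Set.Ioc 0 (2 * π)) ≠ 0 := by simp [pi_pos]
  have ht : volume (Set.Ioc 0 (2 * π)) ≠ ⊤ := measure_Ioc_lt_top.ne
  rw [← ENNReal.mul_le_mul_iff_left h0 ht, ← avg _ hF, mul_assoc]
  have hfst : ∫⁻ x, ENNReal.ofReal (|MvPolynomial.eval x P| ^ p) ∂γ =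
      ∫⁻ z, ENNReal.ofReal (|MvPolynomial.eval z.1 P| ^ p) ∂(γ.prod γ) :=
    ((measurePreserving_fst (μ := γ) (ν := γ)).lintegral_comp hG).symm
  rw [hfst, ← avg (fun z => ENNReal.ofReal (|MvPolynomial.eval z.1 P| ^ p))
    (hG.comp measurable_fst), ← lintegral_const_mul' _ _ ENNReal.ofReal_ne_top]
  exact lintegral_mono fun z => lintegral_rpow_dirDeriv_ellipse_le P hP z.1 z.2 hp

theorem gradNorm_nonneg {k : ℕ} (P : MvPolynomial (Fin k) ℝ) (x : Fin k → ℝ) : 0 ≤ gradNorm P x :=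
  sqrt_nonneg _

theorem continuous_gradNorm {k : ℕ} (P : MvPolynomial (Fin k) ℝ) : Continuous (gradNorm P) :=
  (continuous_finsetSum _ fun _ _ => (MvPolynomial.continuous_eval _).pow 2).sqrt

theorem lintegral_rpow_gradNorm_le {k : ℕ} (P : MvPolynomial (Fin k) ℝ)
    (hP : P.totalDegree ≠ 0) {p : ℝ} (hp : 0 < p) :
    (∫⁻ t, ENNReal.ofReal (|t| ^ p) ∂(gaussianReal 0 1)) *
        ∫⁻ x, ENNReal.ofReal (|gradNorm P x| ^ p) ∂(gaussMeasure k) ≤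
      ENNReal.ofReal ((P.totalDegree : ℝ) ^ p) *
        ∫⁻ x, ENNReal.ofReal (|MvPolynomial.eval x P| ^ p) ∂(gaussMeasure k) := by
  refine le_trans (le_of_eq ?_) (lintegral_rpow_dirDeriv_gaussMeasure_le P hP hp)
  have hF := measurable_rpow_abs_dirDeriv P p
  have hg := (continuous_gradNorm P).measurable
  rw [lintegral_prod _ hF.aemeasurable, ← lintegral_const_mul _ (by fun_prop)]
  refine lintegral_congr fun x => ?_
  simp only [dirDeriv]
  rw [lintegral_rpow_abs_sum_mul_gaussMeasure, mul_comm, abs_of_nonneg (gradNorm_nonneg P x),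
    gradNorm]

end Gaussian

/-- The Gaussian moment form of the dimension independent Bernstein–Markov inequality. -/
theorem bernstein_markov_moment (k : ℕ) (hk : 1 ≤ k) (p : ℝ) (hp : 0 < p)
    (P : MvPolynomial (Fin k) ℝ) :
    (∫ t : ℝ, |t| ^ p ∂(gaussianReal 0 1)) ^ (1 / p) * lpNormGauss p (gradNorm P) ≤
      (P.totalDegree : ℝ) * lpNormGauss p (fun x => MvPolynomial.eval x P) := by
  by_cases hP : P.totalDegree = 0
  · rw [MvPolynomial.totalDegree_eq_zero_iff_eq_C.1 hP]
    simp [lpNormGauss, gradNorm, zero_rpow hp.ne', zero_rpow (inv_pos.2 hp).ne']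
  have hg := (continuous_gradNorm P).measurable
  have h := lintegral_rpow_gradNorm_le P hP hp
  have hI := integrable_rpow_abs_eval_gaussMeasure P hp
  have h' := ENNReal.toReal_mono (ENNReal.mul_ne_top ENNReal.ofReal_ne_top hI.lintegral_lt_top.ne) h
  rw [ENNReal.toReal_mul, ENNReal.toReal_mul, ENNReal.toReal_ofReal (by positivity),
    ← integral_eq_lintegral_of_nonneg_ae (.of_forall fun _ => by positivity)
      (Measurable.aestronglyMeasurable (by fun_prop)),
    ← integral_eq_lintegral_of_nonneg_ae (.of_forall fun _ => by positivity)
      (Measurable.aestronglyMeasurable (by fun_prop)),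
    ← integral_eq_lintegral_of_nonneg_ae (.of_forall fun _ => by positivity)
      hI.aestronglyMeasurable] at h'
  have hnn : ∀ {α : Type} [MeasurableSpace α] (μ : Measure α) (f : α → ℝ),
      0 ≤ ∫ x, |f x| ^ p ∂μ := fun μ f => integral_nonneg fun _ => by positivity
  have h2 := rpow_le_rpow (mul_nonneg (hnn _ _) (hnn _ _)) h' (one_div_nonneg.2 hp.le)
  rwa [mul_rpow (hnn _ fun t => t) (hnn _ _), mul_rpow (by positivity) (hnn _ _),
    ← rpow_mul (Nat.cast_nonneg _), mul_one_div_cancel hp.ne', rpow_one] at h2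
end

section
/- There exists a universal constant C > 0 such that for every integer k ≥ 1 and every polynomial P on ℝ^k, one has sup_{x ∈ ℝ^k} φ_k(x) · |∇P(x)| ≤ C · √(deg P) · sup_{x ∈ ℝ^k} φ_k(x) · |P(x)|, where |∇P(x)| = (Σ_{j=1}^k (∂_j P(x))²)^{1/2}. -/
open MeasureTheory Real

/-- The density of the standard Gaussian measure on `ℝ^k`. -/
noncomputable def gaussDensity (k : ℕ) (x : Fin k → ℝ) : ℝ :=
  (2 * π) ^ (-(k : ℝ) / 2) * Real.exp (-(∑ j, (x j) ^ 2) / 2)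

lemma prod_erase_abs_sub (j m : ℕ) :
    ∏ k ∈ (Finset.range (j + m + 1)).erase j, |(j : ℝ) - k| = j.factorial * m.factorial := by
  induction m with
  | zero =>
    rw [add_zero, Finset.range_add_one, Finset.erase_insert (by simp), ← Finset.prod_range_reflect,
      ← Finset.prod_range_add_one_eq_factorial]
    push_cast
    rw [Nat.factorial_zero, Nat.cast_one, mul_one]
    refine Finset.prod_congr rfl fun i hi => ?_
    have hi : i + 1 ≤ j := Finset.mem_range.1 hi
    rw [Nat.sub_sub, Nat.cast_sub (by omega)]
    push_cast
    rw [abs_of_nonneg (by linarith [Nat.cast_nonneg (α := ℝ) i])]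
    ring
  | succ m ih =>
    rw [show j + (m + 1) + 1 = (j + m + 1) + 1 by ring, Finset.range_add_one,
      Finset.erase_insert_of_ne (by omega), Finset.prod_insert (by simp), ih, Nat.factorial_succ,
      abs_sub_comm]
    push_cast
    rw [abs_of_nonneg (by linarith [Nat.cast_nonneg (α := ℝ) m])]
    ring

open Polynomial in
lemma norm_eval_basis_le {n j : ℕ} (hn : 0 < n) (hj : j ≤ n) (z : ℂ) :
    ‖(Lagrange.basis (Finset.range (n + 1)) (fun k : ℕ => ((k / n : ℝ) : ℂ)) j).eval z‖ ≤
      n.choose j * (n ^ n / n.factorial * (‖z‖ + 1) ^ n) := by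
  obtain ⟨m, rfl⟩ := Nat.exists_eq_add_of_le hj
  have hn' : (0 : ℝ) < ((j + m : ℕ) : ℝ) := by exact_mod_cast hn
  have hcard : ((Finset.range (j + m + 1)).erase j).card = j + m := by
    rw [Finset.card_erase_of_mem (by simp)]; simp
  rw [Lagrange.basis, eval_prod, norm_prod]
  have hterm : ∀ k ∈ (Finset.range (j + m + 1)).erase j,
      ‖(Lagrange.basisDivisor (((j / (j + m : ℕ) : ℝ)) : ℂ) ((k / (j + m : ℕ) : ℝ) : ℂ)).eval z‖ ≤
        (j + m : ℕ) * (‖z‖ + 1) / |(j : ℝ) - k| := by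
    intro k hk
    have hk1 : (k : ℝ) ≤ (j + m : ℕ) := by
      exact_mod_cast Nat.lt_succ_iff.1 (Finset.mem_range.1 (Finset.mem_of_mem_erase hk))
    rw [Lagrange.basisDivisor, eval_mul, eval_C, eval_sub, eval_X, eval_C, norm_mul, norm_inv,
      ← Complex.ofReal_sub, Complex.norm_real, ← sub_div, Real.norm_eq_abs, abs_div,
      abs_of_pos hn', inv_div, div_mul_eq_mul_div]
    gcongr
    refine (norm_sub_le _ _).trans ?_
    gcongr
    rw [Complex.norm_real, Real.norm_eq_abs, abs_of_nonneg (by positivity)]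
    exact (div_le_one hn').2 hk1
  refine (Finset.prod_le_prod (fun _ _ => norm_nonneg _) hterm).trans_eq ?_
  rw [Finset.prod_div_distrib, prod_erase_abs_sub, Finset.prod_const, hcard, mul_pow,
    ← Nat.add_choose_mul_factorial_mul_factorial j m]
  rw [← Nat.choose_symm_add]
  have : ((j + m).choose j : ℝ) ≠ 0 := by
    exact_mod_cast (Nat.choose_pos hj).ne'
  push_cast
  field_simp

/-- A polynomial of degree at most `n` dominated by `M exp (n t ^ 2 / 2)` on the real line is
controlled on the whole complex plane. -/
lemma norm_eval_le_pow {n : ℕ} (hn : 0 < n) {q : Polynomial ℂ} (hq : q.natDegree ≤ n) {M : ℝ}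
    (hM : ∀ t : ℝ, ‖q.eval (t : ℂ)‖ ≤ M * exp (n * t ^ 2 / 2)) (z : ℂ) :
    ‖q.eval z‖ ≤ M * (2 * exp (3 / 2) * (‖z‖ + 1)) ^ n := by
  have hn' : (0 : ℝ) < n := by exact_mod_cast hn
  have hM0 : 0 ≤ M := by simpa using (norm_nonneg _).trans (hM 0)
  have hinj : Set.InjOn (fun k : ℕ => ((k / n : ℝ) : ℂ)) (Finset.range (n + 1)) := by
    intro a _ b _ hab
    have : (a / n : ℝ) = b / n := Complex.ofReal_injective hab
    field_simp at this
    exact_mod_cast this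
  have hdeg : q.degree < (Finset.range (n + 1)).card := by
    rw [Finset.card_range]
    exact Polynomial.degree_le_natDegree.trans_lt (by exact_mod_cast Nat.lt_succ_of_le hq)
  rw [Lagrange.eq_interpolate hinj hdeg, Lagrange.interpolate_apply, Polynomial.eval_finsetSum]
  have hfact : (n : ℝ) ^ n / n.factorial ≤ exp n := Real.pow_div_factorial_le_exp _ hn'.le n
  calc _ ≤ ∑ j ∈ Finset.range (n + 1),
        M * exp (n / 2) * (n.choose j * (exp n * (‖z‖ + 1) ^ n)) := by
        refine norm_sum_le_of_le _ fun j hj => ?_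
        have hj : j ≤ n := Nat.lt_succ_iff.1 (Finset.mem_range.1 hj)
        rw [Polynomial.eval_mul, Polynomial.eval_C, norm_mul]
        refine mul_le_mul ?_ ((norm_eval_basis_le hn hj z).trans ?_) (norm_nonneg _) (by positivity)
        · refine (hM _).trans ?_
          have h1 : (j / n : ℝ) ≤ 1 := (div_le_one hn').2 (by exact_mod_cast hj)
          have h0 : (0 : ℝ) ≤ j / n := by positivity
          gcongr
          nlinarith [pow_le_one₀ h0 h1 (n := 2)]
        · gcongr
    _ = M * exp (n / 2) * (2 ^ n * (exp n * (‖z‖ + 1) ^ n)) := by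
        rw [← Finset.mul_sum, ← Finset.sum_mul]
        congr 2
        exact_mod_cast Nat.sum_range_choose n
    _ = _ := by
        rw [mul_pow, mul_pow, ← Real.exp_nat_mul, show (n : ℝ) * (3 / 2) = n / 2 + n by ring,
          Real.exp_add]
        ring

lemma two_mul_exp_mul_abs_add_le (x : ℝ) :
    2 * exp (3 / 2) * (|x| + 1 + 1) * exp ((1 - x ^ 2) / 2) ≤ exp 5 := by
  have h1 : |x| / 2 + 1 ≤ exp (|x| / 2) := Real.add_one_le_exp _
  have h2 : (4 : ℝ) ≤ exp 2 := by
    have := Real.add_one_le_exp (1 : ℝ)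
    rw [show (2 : ℝ) = 1 + 1 by norm_num, Real.exp_add]
    nlinarith
  calc 2 * exp (3 / 2) * (|x| + 1 + 1) * exp ((1 - x ^ 2) / 2)
      = 4 * exp (3 / 2) * (|x| / 2 + 1) * exp ((1 - x ^ 2) / 2) := by ring
    _ ≤ exp 2 * exp (3 / 2) * exp (|x| / 2) * exp ((1 - x ^ 2) / 2) := by gcongr
    _ = exp (2 + 3 / 2 + |x| / 2 + (1 - x ^ 2) / 2) := by simp only [Real.exp_add]
    _ ≤ exp 5 := by
        gcongr
        nlinarith [sq_nonneg (|x| - 1), sq_abs x]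

lemma norm_eval_mul_gauss_le_exp {n : ℕ} (hn : 0 < n) {q : Polynomial ℂ} (hq : q.natDegree ≤ n)
    {M : ℝ} (hM : ∀ t : ℝ, ‖q.eval (t : ℂ)‖ ≤ M * exp (n * t ^ 2 / 2)) {z : ℂ}
    (hz : |z.im| ≤ 1) : ‖q.eval z * Complex.exp (-(n * z ^ 2 / 2))‖ ≤ M * exp (5 * n) := by
  have hM0 : 0 ≤ M := by simpa using (norm_nonneg _).trans (hM 0)
  have him : z.im ^ 2 ≤ 1 := by rw [← sq_abs]; exact pow_le_one₀ (abs_nonneg _) hz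
  have hre : (-(n * z ^ 2 / 2) : ℂ).re = n * ((z.im ^ 2 - z.re ^ 2) / 2) := by
    rw [show (-(n * z ^ 2 / 2) : ℂ) = ((-(n / 2) : ℝ) : ℂ) * (z * z) by push_cast; ring,
      Complex.re_ofReal_mul, Complex.mul_re]
    ring
  rw [norm_mul, Complex.norm_exp, hre, Real.exp_nat_mul, mul_comm 5, Real.exp_nat_mul]
  calc _ ≤ M * (2 * exp (3 / 2) * (‖z‖ + 1)) ^ n * exp ((z.im ^ 2 - z.re ^ 2) / 2) ^ n := by
        gcongr
        exact norm_eval_le_pow hn hq hM z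
    _ = M * (2 * exp (3 / 2) * (‖z‖ + 1) * exp ((z.im ^ 2 - z.re ^ 2) / 2)) ^ n := by
        rw [mul_assoc, ← mul_pow]
    _ ≤ M * (2 * exp (3 / 2) * (|z.re| + 1 + 1) * exp ((1 - z.re ^ 2) / 2)) ^ n := by
        gcongr
        linarith [Complex.norm_le_abs_re_add_abs_im z]
    _ ≤ _ := by
        gcongr
        exact two_mul_exp_mul_abs_add_le _

lemma norm_eval_mul_gauss_le_of_im_nonneg {n : ℕ} (hn : 0 < n) {q : Polynomial ℂ}
    (hq : q.natDegree ≤ n) {M : ℝ} (hM : ∀ t : ℝ, ‖q.eval (t : ℂ)‖ ≤ M * exp (n * t ^ 2 / 2))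
    {z : ℂ} (hz0 : 0 ≤ z.im) (hz1 : z.im ≤ 1) :
    ‖q.eval z * Complex.exp (-(n * z ^ 2 / 2))‖ ≤ M * exp (5 * n * z.im) := by
  have hM0 : 0 ≤ M := by simpa using (norm_nonneg _).trans (hM 0)
  set f : ℂ → ℂ := fun w => q.eval w * Complex.exp (-(n * w ^ 2 / 2)) *
    Complex.exp ((5 * n : ℝ) * w * Complex.I) with hf
  have hnorm : ∀ w : ℂ, ‖f w‖ =
      ‖q.eval w * Complex.exp (-(n * w ^ 2 / 2))‖ * exp (-(5 * n * w.im)) := by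
    intro w
    rw [hf, norm_mul, Complex.norm_exp]
    congr 2
    rw [Complex.mul_I_re, Complex.im_ofReal_mul]
  have hdiff : Differentiable ℂ f := by
    have := q.differentiable
    fun_prop
  have hstrip : ∀ w : ℂ, w.im ∈ Set.Ioo (0 : ℝ) 1 → ‖f w‖ ≤ M * exp (5 * n) := by
    intro w hw
    rw [hnorm]
    refine (mul_le_of_le_one_right (norm_nonneg _) ?_).trans
      (norm_eval_mul_gauss_le_exp hn hq hM (abs_le.2 ⟨by linarith [hw.1], hw.2.le⟩))
    rw [Real.exp_le_one_iff, neg_nonpos]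
    have := hw.1
    positivity
  have key : ‖f z‖ ≤ M := by
    refine PhragmenLindelof.horizontal_strip (a := 0) (b := 1) hdiff.diffContOnCl
      ⟨0, by simpa using Real.pi_pos, 0, ?_⟩ ?_ ?_ hz0 hz1
    · refine Asymptotics.IsBigO.of_bound (M * exp (5 * n)) ?_
      refine Filter.Eventually.filter_mono inf_le_right ?_
      refine Filter.eventually_principal.2 fun w hw => ?_
      simpa using hstrip w hw
    · intro w hw
      obtain ⟨t, rfl⟩ : ∃ t : ℝ, w = t := ⟨w.re, by apply Complex.ext <;> simp [hw]⟩
      rw [hnorm, hw, mul_zero, neg_zero, Real.exp_zero, mul_one, norm_mul, Complex.norm_exp]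
      have : (-(n * (t : ℂ) ^ 2 / 2)).re = -(n * t ^ 2 / 2) := by
        rw [show (-(n * (t : ℂ) ^ 2 / 2)) = ((-(n * t ^ 2 / 2) : ℝ) : ℂ) by push_cast; ring,
          Complex.ofReal_re]
      rw [this, Real.exp_neg, ← div_eq_mul_inv, div_le_iff₀ (Real.exp_pos _)]
      exact hM t
    · intro w hw
      rw [hnorm, hw, mul_one, Real.exp_neg, ← div_eq_mul_inv, div_le_iff₀ (Real.exp_pos _)]
      exact norm_eval_mul_gauss_le_exp hn hq hM (by rw [hw]; simp)
  rwa [hnorm, Real.exp_neg, ← div_eq_mul_inv, div_le_iff₀ (Real.exp_pos _)] at key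

/-- In a strip around the real line, the Gaussian bound persists up to a factor
`exp (5 * n * |z.im|)`. -/
lemma norm_eval_mul_gauss_le {n : ℕ} (hn : 0 < n) {q : Polynomial ℂ}
    (hq : q.natDegree ≤ n) {M : ℝ} (hM : ∀ t : ℝ, ‖q.eval (t : ℂ)‖ ≤ M * exp (n * t ^ 2 / 2))
    {z : ℂ} (hz : |z.im| ≤ 1) :
    ‖q.eval z * Complex.exp (-(n * z ^ 2 / 2))‖ ≤ M * exp (5 * n * |z.im|) := by
  rcases le_total 0 z.im with h | h
  · rw [abs_of_nonneg h] at hz ⊢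
    exact norm_eval_mul_gauss_le_of_im_nonneg hn hq hM h hz
  · rw [abs_of_nonpos h] at hz ⊢
    have := norm_eval_mul_gauss_le_of_im_nonneg (q := q.comp (-Polynomial.X)) (z := -z) hn
      (by rwa [Polynomial.natDegree_comp, Polynomial.natDegree_neg, Polynomial.natDegree_X,
        mul_one])
      (M := M) (fun t => by simpa using hM (-t)) (by simpa using h) (by simpa using hz)
    simpa using this

lemma abs_mul_norm_eval_le {n : ℕ} (hn : 0 < n) {q : Polynomial ℂ} (hq : q.natDegree ≤ n) {M : ℝ}
    (hM : ∀ t : ℝ, ‖q.eval (t : ℂ)‖ ≤ M * exp (n * t ^ 2 / 2)) (s : ℝ) :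
    |s| * ‖q.eval (s : ℂ)‖ ≤ 15 * M * exp (n * s ^ 2 / 2) := by
  have hM0 : 0 ≤ M := by simpa using (norm_nonneg _).trans (hM 0)
  rcases le_total |s| 15 with h | h
  · rw [mul_assoc]
    exact mul_le_mul h (hM s) (norm_nonneg _) (by norm_num)
  · have hs0 : 0 < |s| := by linarith
    have he : exp (3 / 2) ≤ 8 := by
      have h1 : exp (3 / 2) ≤ exp (1 + 1) := by gcongr; norm_num
      rw [Real.exp_add] at h1
      nlinarith [Real.exp_one_lt_d9, Real.exp_pos 1]
    have hX : |s| * (2 * exp (3 / 2) * (|s| + 1)) ≤ exp (s ^ 2 / 2) := by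
      have h1 : (s ^ 2 / 2) ^ 2 / 2 ≤ exp (s ^ 2 / 2) := by
        simpa using Real.pow_div_factorial_le_exp (s ^ 2 / 2) (by positivity) 2
      calc |s| * (2 * exp (3 / 2) * (|s| + 1)) ≤ |s| * (2 * 8 * (|s| + |s| / 15)) := by
            gcongr; linarith
        _ ≤ |s| ^ 2 * (15 ^ 2 / 8) := by nlinarith
        _ ≤ |s| ^ 2 * (|s| ^ 2 / 8) := by gcongr
        _ = (s ^ 2 / 2) ^ 2 / 2 := by rw [← sq_abs s]; ring
        _ ≤ _ := h1
    have hs1 : |s| ≤ |s| ^ n := le_self_pow₀ (by linarith) hn.ne'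
    calc |s| * ‖q.eval (s : ℂ)‖
        ≤ |s| ^ n * (M * (2 * exp (3 / 2) * (‖(s : ℂ)‖ + 1)) ^ n) := by
          gcongr
          exact norm_eval_le_pow hn hq hM s
      _ = M * (|s| * (2 * exp (3 / 2) * (|s| + 1))) ^ n := by
          rw [Complex.norm_real, Real.norm_eq_abs, mul_pow |s|]; ring
      _ ≤ M * exp (s ^ 2 / 2) ^ n := by gcongr
      _ = M * exp (n * s ^ 2 / 2) := by rw [← Real.exp_nat_mul]; ring_nf
      _ ≤ 15 * M * exp (n * s ^ 2 / 2) := by gcongr; linarith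

/-- Freud's inequality in dimension one, in scaled form. -/
lemma norm_eval_derivative_le {n : ℕ} (hn : 0 < n) {q : Polynomial ℂ} (hq : q.natDegree ≤ n)
    {M : ℝ} (hM : ∀ t : ℝ, ‖q.eval (t : ℂ)‖ ≤ M * exp (n * t ^ 2 / 2)) (s : ℝ) :
    ‖q.derivative.eval (s : ℂ)‖ ≤ (exp 5 + 15) * n * M * exp (n * s ^ 2 / 2) := by
  have hM0 : 0 ≤ M := by simpa using (norm_nonneg _).trans (hM 0)
  have hn' : (0 : ℝ) < n := by exact_mod_cast hn
  have hn1 : (1 : ℝ) ≤ n := by exact_mod_cast hn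
  set h : ℂ → ℂ := fun w => q.eval w * Complex.exp (-(n * w ^ 2 / 2))
  have hderiv : HasDerivAt h ((q.derivative.eval (s : ℂ) - n * s * q.eval (s : ℂ)) *
      Complex.exp (-(n * (s : ℂ) ^ 2 / 2))) s := by
    have h1 : HasDerivAt (fun w : ℂ => -(n * w ^ 2 / 2)) (-(n * s) : ℂ) (s : ℂ) := by
      refine (((hasDerivAt_pow 2 (s : ℂ)).const_mul (n : ℂ)).div_const 2).neg.congr_deriv ?_
      push_cast
      ring
    refine ((q.hasDerivAt (s : ℂ)).mul h1.cexp).congr_deriv ?_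
    ring
  have hdiff : Differentiable ℂ h := by
    have := q.differentiable
    fun_prop
  have hcauchy : ‖deriv h s‖ ≤ M * exp 5 / (1 / n) := by
    refine Complex.norm_deriv_le_of_forall_mem_sphere_norm_le (by positivity) hdiff.diffContOnCl
      fun z hz => ?_
    have him : |z.im| ≤ 1 / n := by
      have := Complex.abs_im_le_norm (z - s)
      rw [mem_sphere_iff_norm.1 hz] at this
      simpa using this
    refine (norm_eval_mul_gauss_le hn hq hM (him.trans ((div_le_one hn').2 hn1))).trans ?_
    gcongr
    calc 5 * n * |z.im| ≤ 5 * n * (1 / n) := by gcongr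
      _ = 5 := by field_simp
  have hexp : ‖Complex.exp (-(n * (s : ℂ) ^ 2 / 2))‖ = (exp (n * s ^ 2 / 2))⁻¹ := by
    rw [show (-(n * (s : ℂ) ^ 2 / 2)) = ((-(n * s ^ 2 / 2) : ℝ) : ℂ) by push_cast; ring,
      ← Complex.ofReal_exp, Complex.norm_real, Real.norm_eq_abs, Real.abs_exp, Real.exp_neg]
  rw [hderiv.deriv, norm_mul, hexp, ← div_eq_mul_inv, div_le_iff₀ (Real.exp_pos _),
    div_div_eq_mul_div, div_one] at hcauchy
  have hsmall : ‖(n * s * q.eval (s : ℂ) : ℂ)‖ ≤ n * (15 * M * exp (n * s ^ 2 / 2)) := by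
    rw [norm_mul, norm_mul, Complex.norm_natCast, Complex.norm_real, Real.norm_eq_abs, mul_assoc]
    exact mul_le_mul_of_nonneg_left (abs_mul_norm_eval_le hn hq hM s) hn'.le
  have htri := norm_sub_norm_le (q.derivative.eval (s : ℂ)) (n * s * q.eval (s : ℂ))
  linear_combination htri + hcauchy + hsmall

/-- Freud's inequality in dimension one. -/
lemma abs_eval_derivative_le {n : ℕ} (hn : 0 < n) {Q : Polynomial ℝ} (hQ : Q.natDegree ≤ n)
    {M : ℝ} (hM : ∀ t : ℝ, |Q.eval t| ≤ M * exp (t ^ 2 / 2)) (s : ℝ) :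
    |Q.derivative.eval s| ≤ (exp 5 + 15) * √n * M * exp (s ^ 2 / 2) := by
  have hn' : (0 : ℝ) < n := by exact_mod_cast hn
  have hr : 0 < √(n : ℝ) := Real.sqrt_pos.2 hn'
  have hr2 : √(n : ℝ) ^ 2 = n := Real.sq_sqrt hn'.le
  set R : Polynomial ℝ := Q.comp (Polynomial.C √(n : ℝ) * Polynomial.X) with hR
  have heval : ∀ (p : Polynomial ℝ) (t : ℝ),
      ‖(p.map Complex.ofRealHom).eval (t : ℂ)‖ = |p.eval t| := by
    intro p t
    rw [← Complex.ofRealHom_eq_coe, Polynomial.eval_map_apply, Complex.ofRealHom_eq_coe,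
      Complex.norm_real, Real.norm_eq_abs]
  have key := norm_eval_derivative_le hn (q := R.map Complex.ofRealHom) (M := M) ?_ ?_ (s / √n)
  · rw [Polynomial.derivative_map, heval, hR, Polynomial.derivative_comp] at key
    have e1 : (n : ℝ) * (s / √n) ^ 2 / 2 = s ^ 2 / 2 := by
      rw [div_pow, hr2]; field_simp
    have e2 : √(n : ℝ) * (s / √n) = s := by field_simp
    simp only [Polynomial.derivative_mul, Polynomial.derivative_C, Polynomial.derivative_X,
      Polynomial.eval_mul, Polynomial.eval_comp, Polynomial.eval_C, Polynomial.eval_X, zero_mul,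
      zero_add, mul_one, e1, e2, abs_mul, abs_of_pos hr] at key
    refine le_of_mul_le_mul_left (key.trans_eq ?_) hr
    rw [← hr2, Real.sqrt_sq hr.le]
    ring
  · rwa [Polynomial.natDegree_map, hR, Polynomial.natDegree_comp,
      Polynomial.natDegree_C_mul_X _ hr.ne', mul_one]
  · intro t
    rw [heval, hR, Polynomial.eval_comp]
    refine (hM _).trans_eq ?_
    simp [mul_pow, hr2]

lemma MvPolynomial.natDegree_aeval_le_totalDegree {σ R : Type*} [CommSemiring R]
    (P : MvPolynomial σ R) {f : σ → Polynomial R} (hf : ∀ i, (f i).natDegree ≤ 1) :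
    (MvPolynomial.aeval f P).natDegree ≤ P.totalDegree := by
  rw [MvPolynomial.aeval_def, MvPolynomial.eval₂_eq]
  refine Polynomial.natDegree_sum_le_of_forall_le _ _ fun d hd => ?_
  refine (Polynomial.natDegree_C_mul_le _ _).trans ?_
  refine (Polynomial.natDegree_prod_le _ _).trans
    (le_trans ?_ (MvPolynomial.le_totalDegree hd))
  exact Finset.sum_le_sum fun i _ => by simpa using Polynomial.natDegree_pow_le_of_le (d i) (hf i)

lemma MvPolynomial.derivative_aeval {σ R : Type*} [Fintype σ] [CommSemiring R]
    (P : MvPolynomial σ R) (f : σ → Polynomial R) :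
    Polynomial.derivative (MvPolynomial.aeval f P) =
      ∑ i, MvPolynomial.aeval f (MvPolynomial.pderiv i P) * Polynomial.derivative (f i) := by
  classical
  induction P using MvPolynomial.induction_on with
  | C a => simp
  | add p q hp hq => simp only [map_add, hp, hq, add_mul, Finset.sum_add_distrib]
  | mul_X p j hp =>
    simp only [map_mul, MvPolynomial.aeval_X, Polynomial.derivative_mul, hp,
      MvPolynomial.pderiv_mul, map_add, add_mul, Finset.sum_add_distrib, MvPolynomial.pderiv_X]
    congr 1
    · rw [Finset.sum_mul]
      exact Finset.sum_congr rfl fun i _ => by ring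
    · rw [Finset.sum_eq_single j]
      · simp
      · intro i _ hij
        simp [hij.symm]
      · simp

lemma MvPolynomial.eval_aeval_polynomial {σ R : Type*} [CommSemiring R]
    (P : MvPolynomial σ R) (f : σ → Polynomial R) (t : R) :
    (MvPolynomial.aeval f P).eval t = MvPolynomial.eval (fun i => (f i).eval t) P := by
  induction P using MvPolynomial.induction_on with
  | C a => simp
  | add p q hp hq => simp [hp, hq]
  | mul_X p j hp => simp [hp]

/-- Polynomials grow more slowly than any Gaussian. -/
lemma MvPolynomial.exists_abs_eval_le_exp {σ : Type*} [Fintype σ] (P : MvPolynomial σ ℝ) :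
    ∀ ε > 0, ∃ A, ∀ x : σ → ℝ, |MvPolynomial.eval x P| ≤ A * exp (ε * ∑ j, x j ^ 2) := by
  induction P using MvPolynomial.induction_on with
  | C a =>
    intro ε hε
    refine ⟨|a|, fun x => ?_⟩
    rw [MvPolynomial.eval_C]
    refine le_mul_of_one_le_right (abs_nonneg _) (Real.one_le_exp ?_)
    positivity
  | add p q hp hq =>
    intro ε hε
    obtain ⟨A, hA⟩ := hp ε hε
    obtain ⟨B, hB⟩ := hq ε hε
    refine ⟨A + B, fun x => ?_⟩
    rw [map_add, add_mul]
    exact (abs_add_le _ _).trans (add_le_add (hA x) (hB x))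
  | mul_X p j hp =>
    intro ε hε
    obtain ⟨A, hA⟩ := hp (ε / 2) (half_pos hε)
    refine ⟨A * (1 + 2 / ε), fun x => ?_⟩
    have hx : |x j| ≤ (1 + 2 / ε) * exp (ε / 2 * ∑ j, x j ^ 2) := by
      have h1 : x j ^ 2 ≤ ∑ j, x j ^ 2 :=
        Finset.single_le_sum (f := fun j => x j ^ 2) (fun _ _ => sq_nonneg _) (Finset.mem_univ j)
      have h2 : |x j| ≤ 1 + x j ^ 2 := by
        rw [← sq_abs]; nlinarith [sq_nonneg (|x j| - 1)]
      have h3 : ε / 2 * x j ^ 2 + 1 ≤ exp (ε / 2 * ∑ j, x j ^ 2) :=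
        le_trans (by gcongr) (Real.add_one_le_exp _)
      refine h2.trans (le_trans ?_ (mul_le_mul_of_nonneg_left h3 (by positivity)))
      have : (1 + 2 / ε) * (ε / 2 * x j ^ 2 + 1) =
          1 + x j ^ 2 + (ε / 2 * x j ^ 2 + 2 / ε) := by field_simp; ring
      rw [this]
      have : 0 ≤ ε / 2 * x j ^ 2 + 2 / ε := by positivity
      linarith
    rw [map_mul, MvPolynomial.eval_X, abs_mul]
    calc _ ≤ (A * exp (ε / 2 * ∑ j, x j ^ 2)) * ((1 + 2 / ε) * exp (ε / 2 * ∑ j, x j ^ 2)) :=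
          mul_le_mul (hA x) hx (abs_nonneg _) ((abs_nonneg _).trans (hA x))
      _ = A * (1 + 2 / ε) * (exp (ε / 2 * ∑ j, x j ^ 2) * exp (ε / 2 * ∑ j, x j ^ 2)) := by ring
      _ = _ := by rw [← Real.exp_add]; ring_nf

lemma bddAbove_gaussDensity_mul_abs_eval {k : ℕ} (P : MvPolynomial (Fin k) ℝ) :
    BddAbove (Set.range fun x : Fin k → ℝ => gaussDensity k x * |MvPolynomial.eval x P|) := by
  obtain ⟨A, hA⟩ := P.exists_abs_eval_le_exp (1 / 2) (by norm_num)
  refine ⟨(2 * π) ^ (-(k : ℝ) / 2) * A, ?_⟩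
  rintro _ ⟨x, rfl⟩
  have hexp : exp (-(∑ j, x j ^ 2) / 2) * exp (1 / 2 * ∑ j, x j ^ 2) = 1 := by
    rw [← Real.exp_add, Real.exp_eq_one_iff]; ring
  calc gaussDensity k x * |MvPolynomial.eval x P|
      ≤ gaussDensity k x * (A * exp (1 / 2 * ∑ j, x j ^ 2)) := by
        refine mul_le_mul_of_nonneg_left (hA x) ?_
        unfold gaussDensity
        positivity
    _ = (2 * π) ^ (-(k : ℝ) / 2) * A *
        (exp (-(∑ j, x j ^ 2) / 2) * exp (1 / 2 * ∑ j, x j ^ 2)) := by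
        unfold gaussDensity; ring
    _ = _ := by rw [hexp, mul_one]

/-- Freud's inequality along the line through `y` in a direction `v` orthogonal to `y`. -/
lemma gaussDensity_mul_abs_sum_pderiv_le {k : ℕ} {P : MvPolynomial (Fin k) ℝ}
    (hP : 0 < P.totalDegree) {S : ℝ} (hS : ∀ x, gaussDensity k x * |MvPolynomial.eval x P| ≤ S)
    {y v : Fin k → ℝ} (hv : ∑ j, v j ^ 2 = 1) (hyv : ∑ j, y j * v j = 0) (s : ℝ) :
    gaussDensity k (fun j => y j + s * v j) *
        |∑ j, MvPolynomial.eval (fun j => y j + s * v j) (MvPolynomial.pderiv j P) * v j| ≤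
      (exp 5 + 15) * √P.totalDegree * S := by
  have hsq : ∀ t : ℝ, ∑ j, (y j + t * v j) ^ 2 = ∑ j, y j ^ 2 + t ^ 2 := by
    intro t
    have : ∀ j, (y j + t * v j) ^ 2 = y j ^ 2 + 2 * t * (y j * v j) + t ^ 2 * v j ^ 2 := by
      intro j; ring
    simp only [this, Finset.sum_add_distrib, ← Finset.mul_sum, hv, hyv]
    ring
  have hdens : ∀ t : ℝ, gaussDensity k (fun j => y j + t * v j) =
      gaussDensity k y / exp (t ^ 2 / 2) := by
    intro t
    rw [gaussDensity, gaussDensity, hsq, mul_div_assoc, ← Real.exp_sub]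
    ring_nf
  have hy : 0 < gaussDensity k y := by
    unfold gaussDensity; positivity
  set f : Fin k → Polynomial ℝ := fun j => Polynomial.C (y j) + Polynomial.X * Polynomial.C (v j)
  have hf : ∀ t : ℝ, (fun j => (f j).eval t) = fun j => y j + t * v j := by
    intro t; funext j; simp [f, mul_comm t]
  have hf' : ∀ j, (f j).derivative = Polynomial.C (v j) := by
    intro j; simp [f]
  have hfdeg : ∀ j, (f j).natDegree ≤ 1 := by
    intro j
    refine Polynomial.natDegree_add_le_of_degree_le (by simp) ?_
    exact (Polynomial.natDegree_mul_C_le _ _).trans Polynomial.natDegree_X_le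
  have key := abs_eval_derivative_le hP (P.natDegree_aeval_le_totalDegree hfdeg)
    (M := S / gaussDensity k y) (fun t => by
      have := hS (fun j => y j + t * v j)
      rw [hdens, div_mul_eq_mul_div, div_le_iff₀ (Real.exp_pos _)] at this
      rw [MvPolynomial.eval_aeval_polynomial, hf, div_mul_eq_mul_div, le_div_iff₀ hy, mul_comm]
      exact this) s
  simp only [MvPolynomial.derivative_aeval, hf', Polynomial.eval_finsetSum, Polynomial.eval_mul,
    Polynomial.eval_C, MvPolynomial.eval_aeval_polynomial, hf] at key
  rw [hdens]
  refine (mul_le_mul_of_nonneg_left key (by positivity)).trans_eq ?_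
  field_simp

lemma gaussDensity_mul_gradNorm_le {k : ℕ} {P : MvPolynomial (Fin k) ℝ}
    {S : ℝ} (hS : ∀ x, gaussDensity k x * |MvPolynomial.eval x P| ≤ S) (x : Fin k → ℝ) :
    gaussDensity k x * gradNorm P x ≤ (exp 5 + 15) * √P.totalDegree * S := by
  have hdens : ∀ x, 0 < gaussDensity k x := fun x => by unfold gaussDensity; positivity
  have hS0 : 0 ≤ S := (mul_nonneg (hdens 0).le (abs_nonneg _)).trans (hS 0)
  rcases Nat.eq_zero_or_pos P.totalDegree with h0 | hP
  · rw [MvPolynomial.totalDegree_eq_zero_iff_eq_C] at h0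
    rw [h0]
    simp [gradNorm]
  set g : Fin k → ℝ := fun j => MvPolynomial.eval x (MvPolynomial.pderiv j P)
  set r : ℝ := gradNorm P x
  have hr : 0 ≤ r := Real.sqrt_nonneg _
  rcases hr.eq_or_lt with h0 | hpos
  · rw [← h0, mul_zero]; positivity
  have hr2 : r ^ 2 = ∑ j, g j ^ 2 := Real.sq_sqrt (Finset.sum_nonneg fun _ _ => sq_nonneg _)
  set v : Fin k → ℝ := fun j => g j / r
  have hv : ∑ j, v j ^ 2 = 1 := by
    simp only [v, div_pow, ← Finset.sum_div, ← hr2]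
    field_simp
  set s : ℝ := ∑ j, x j * v j
  have hyv : ∑ j, (x j - s * v j) * v j = 0 := by
    have : ∀ j, (x j - s * v j) * v j = x j * v j - s * v j ^ 2 := fun j => by ring
    simp only [this, Finset.sum_sub_distrib, ← Finset.mul_sum, hv]
    simp [s]
  have key := gaussDensity_mul_abs_sum_pderiv_le hP hS hv hyv s
  have hgr : ∑ j, g j * v j = r := by
    have : ∀ j, g j * v j = g j ^ 2 / r := fun j => by simp only [v]; ring
    simp only [this, ← Finset.sum_div, ← hr2]
    field_simp
  simp only [sub_add_cancel] at key
  have habs : |∑ j, MvPolynomial.eval x (MvPolynomial.pderiv j P) * v j| = r := by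
    rw [← abs_of_pos hpos, ← hgr]
  rwa [habs] at key

/-- Dimension independent `L^∞` Freud inequality in Gauss space. -/
theorem freud_Linfty_gauss :
    ∃ C : ℝ, 0 < C ∧ ∀ k : ℕ, 1 ≤ k → ∀ P : MvPolynomial (Fin k) ℝ,
      (⨆ x : Fin k → ℝ, gaussDensity k x * gradNorm P x) ≤
        C * Real.sqrt (P.totalDegree : ℝ) *
          ⨆ x : Fin k → ℝ, gaussDensity k x * |MvPolynomial.eval x P| :=
  ⟨exp 5 + 15, by positivity, fun _ _ P => ciSup_le <|
    gaussDensity_mul_gradNorm_le (le_ciSup (bddAbove_gaussDensity_mul_abs_eval P))⟩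
end

section
/- There exists a universal constant C > 0 such that for all integers k ≥ 1 and n ≥ 1 there is a polynomial ρ_n on ℝ^k of total degree at most C·n satisfying: C^{-1}·W_k(x) ≤ ρ_n(x) ≤ C·W_k(x) for all x with |x| ≤ 2a_n, and |∇ρ_n(x)| ≤ C·√n·W_k(x) for all x with |x| ≤ a_n, where W_k(x) = exp(−|x|²), a_n = √(n/2), and |∇ρ_n(x)| = (Σ_{j=1}^k (∂_j ρ_n(x))²)^{1/2}. -/
open Real

/-- The Euclidean norm on `ℝ^k`. -/
noncomputable def euclNorm {k : ℕ} (x : Fin k → ℝ) : ℝ :=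
  Real.sqrt (∑ j, (x j) ^ 2)

namespace GaussianWeight

open MvPolynomial Finset

/-- The Taylor polynomial of `exp (-|x|²)` with `M` terms, as a polynomial on `ℝ^k`. -/
noncomputable def taylorWeight (k M : ℕ) : MvPolynomial (Fin k) ℝ :=
  ∑ i ∈ range M, C ((i.factorial : ℝ)⁻¹) * (-∑ j, X j ^ 2) ^ i

lemma euclNorm_sq {k : ℕ} (x : Fin k → ℝ) : euclNorm x ^ 2 = ∑ j, x j ^ 2 :=
  Real.sq_sqrt (sum_nonneg fun _ _ => sq_nonneg _)

lemma eval_taylorWeight {k : ℕ} (M : ℕ) (x : Fin k → ℝ) :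
    eval x (taylorWeight k M) = ∑ i ∈ range M, (-euclNorm x ^ 2) ^ i / (i.factorial : ℝ) := by
  simp [taylorWeight, euclNorm_sq, div_eq_inv_mul]

lemma totalDegree_taylorWeight_le (k M : ℕ) :
    (taylorWeight k (M + 1)).totalDegree ≤ 2 * M := by
  refine totalDegree_finsetSum_le fun i hi => ?_
  have hS : (-∑ j, X j ^ 2 : MvPolynomial (Fin k) ℝ).totalDegree ≤ 2 := by
    rw [totalDegree_neg]
    exact totalDegree_finsetSum_le fun j _ => (totalDegree_X_pow j 2).le
  calc _ ≤ _ := totalDegree_mul _ _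
    _ ≤ 0 + i * 2 := by
      rw [totalDegree_C]
      gcongr
      exact (totalDegree_pow _ _).trans (Nat.mul_le_mul_left _ hS)
    _ ≤ 2 * M := by have := mem_range.1 hi; omega

lemma pderiv_taylorWeight {k : ℕ} (M : ℕ) (j : Fin k) :
    pderiv j (taylorWeight k (M + 1)) = -(2 * X j * taylorWeight k M) := by
  have hS : pderiv j (-∑ l, X l ^ 2 : MvPolynomial (Fin k) ℝ) = -(2 * X j) := by
    simp [pderiv_X, Pi.single_apply, Derivation.leibniz_pow]
  induction M with
  | zero => simp [taylorWeight]
  | succ M ih =>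
    have hc : (C (((M + 1).factorial : ℝ)⁻¹) * ((M + 1 : ℕ) : MvPolynomial (Fin k) ℝ)) =
        C ((M.factorial : ℝ)⁻¹) := by
      rw [← map_natCast (C : ℝ →+* MvPolynomial (Fin k) ℝ), ← C_mul, Nat.factorial_succ]
      congr 1
      push_cast
      field_simp
    have h₁ := sum_range_succ
      (fun i => C ((i.factorial : ℝ)⁻¹) * (-∑ j : Fin k, X j ^ 2) ^ i) (M + 1)
    have h₂ := sum_range_succ
      (fun i => C ((i.factorial : ℝ)⁻¹) * (-∑ j : Fin k, X j ^ 2) ^ i) M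
    change taylorWeight k (M + 2) = taylorWeight k (M + 1) + _ at h₁
    change taylorWeight k (M + 1) = taylorWeight k M + _ at h₂
    rw [h₁, map_add, ih, h₂, pderiv_C_mul, Derivation.leibniz_pow, hS, ← hc]
    simp only [smul_eq_mul, nsmul_eq_mul, C_mul', Nat.add_sub_cancel, smul_mul_assoc]
    simp only [smul_eq_C_mul]
    ring

lemma pow_div_factorial_le_exp_neg {t : ℝ} {n M : ℕ} (ht : 0 ≤ t) (htn : t ≤ 2 * n)
    (hn : 1 ≤ n) (hM : 10 * n ≤ M) : t ^ M / M.factorial * 2 ≤ exp (-t) / 2 := by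
  have h₁ := Real.pow_div_factorial_le_exp (exp 1 * t) (by positivity) M
  have h₂ : (exp 1 * t) ^ M = exp M * t ^ M := by
    rw [mul_pow, ← exp_nat_mul, mul_one]
  have hn' : (1 : ℝ) ≤ n := by exact_mod_cast hn
  have hM' : (10 : ℝ) * n ≤ M := by exact_mod_cast hM
  have he : exp 1 * t ≤ 2.75 * t := by
    gcongr
    linarith [Real.exp_one_lt_d9]
  have h₃ : t ^ M / M.factorial ≤ exp (-t - 2) := by
    rw [h₂, mul_div_assoc] at h₁
    have : exp (exp 1 * t) ≤ exp M * exp (-t - 2) := by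
      rw [← exp_add]
      exact exp_le_exp.2 (by linarith)
    exact le_of_mul_le_mul_left (h₁.trans this) (exp_pos _)
  have h₄ : 4 ≤ exp 2 := by
    have := Real.exp_one_gt_d9
    rw [show (2 : ℝ) = 1 + 1 by norm_num, exp_add]
    nlinarith
  have h₅ : exp (-t - 2) * exp 2 = exp (-t) := by rw [← exp_add]; ring_nf
  nlinarith [exp_pos (-t - 2)]

lemma abs_exp_neg_sub_sum_le {t : ℝ} {n M : ℕ} (ht : 0 ≤ t) (htn : t ≤ 2 * n)
    (hn : 1 ≤ n) (hM : 10 * n ≤ M) :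
    |exp (-t) - ∑ i ∈ range M, (-t) ^ i / (i.factorial : ℝ)| ≤ exp (-t) / 2 := by
  have hM' : (10 : ℝ) * n ≤ M := by exact_mod_cast hM
  have h := Complex.exp_bound' (x := ((-t : ℝ) : ℂ)) (n := M) (by
    rw [Complex.norm_real, norm_neg, Real.norm_of_nonneg ht, div_le_iff₀ (by positivity)]
    push_cast
    linarith)
  rw [Complex.norm_real, norm_neg, Real.norm_of_nonneg ht] at h
  have h' : |exp (-t) - ∑ i ∈ range M, (-t) ^ i / (i.factorial : ℝ)|
      ≤ t ^ M / M.factorial * 2 := by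
    rw [← Real.norm_eq_abs, ← Complex.norm_real]
    exact_mod_cast h
  exact h'.trans (pow_div_factorial_le_exp_neg ht htn hn hM)

lemma gradNorm_taylorWeight {k : ℕ} (M : ℕ) (x : Fin k → ℝ) :
    gradNorm (taylorWeight k (M + 1)) x = 2 * |eval x (taylorWeight k M)| * euclNorm x := by
  have h : ∑ j, (eval x (pderiv j (taylorWeight k (M + 1)))) ^ 2 =
      (2 * |eval x (taylorWeight k M)| * euclNorm x) ^ 2 := by
    rw [mul_pow, euclNorm_sq, mul_sum, mul_pow, sq_abs]
    refine sum_congr rfl fun j _ => ?_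
    rw [pderiv_taylorWeight]
    simp only [map_neg, map_mul, eval_X, map_ofNat]
    ring
  rw [gradNorm, h]
  exact Real.sqrt_sq (mul_nonneg (by positivity) (Real.sqrt_nonneg _))

end GaussianWeight

open GaussianWeight in
/-- Existence of polynomial approximants `ρ_n` to the weight `W_k(x) = exp(-|x|²)` in `ℝ^k`,
comparable to `W_k` on the ball of radius `2a_n` and with gradient bound `C√n W_k` on the
ball of radius `a_n`, where `a_n = √(n/2)`. -/
theorem exists_polynomial_weight_approximant :
    ∃ C : ℝ, 0 < C ∧ ∀ k n : ℕ, 1 ≤ k → 1 ≤ n →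
      ∃ ρ : MvPolynomial (Fin k) ℝ,
        (ρ.totalDegree : ℝ) ≤ C * n ∧
        (∀ x : Fin k → ℝ, euclNorm x ≤ 2 * Real.sqrt ((n : ℝ) / 2) →
          C⁻¹ * Real.exp (-(euclNorm x) ^ 2) ≤ MvPolynomial.eval x ρ ∧
          MvPolynomial.eval x ρ ≤ C * Real.exp (-(euclNorm x) ^ 2)) ∧
        (∀ x : Fin k → ℝ, euclNorm x ≤ Real.sqrt ((n : ℝ) / 2) →
          gradNorm ρ x ≤ C * Real.sqrt (n : ℝ) * Real.exp (-(euclNorm x) ^ 2)) := by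
  refine ⟨20, by norm_num, fun k n _ hn => ⟨taylorWeight k (10 * n + 1), ?_, ?_, ?_⟩⟩
  · have := totalDegree_taylorWeight_le k (10 * n)
    calc ((taylorWeight k (10 * n + 1)).totalDegree : ℝ) ≤ (2 * (10 * n) : ℕ) := by
          exact_mod_cast this
      _ = 20 * n := by push_cast; ring
  all_goals
    intro x hx
    have hx₀ : 0 ≤ euclNorm x := Real.sqrt_nonneg _
    have hs : Real.sqrt ((n : ℝ) / 2) ^ 2 = n / 2 := Real.sq_sqrt (by positivity)
    have hs₀ := Real.sqrt_nonneg ((n : ℝ) / 2)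
    have ht : euclNorm x ^ 2 ≤ 2 * n := by nlinarith
    have hE := exp_pos (-euclNorm x ^ 2)
  · have h := abs_le.1 (abs_exp_neg_sub_sum_le (sq_nonneg _) ht hn (Nat.le_succ (10 * n)))
    rw [eval_taylorWeight]
    constructor <;> linarith [h.1, h.2]
  · have h := abs_le.1 (abs_exp_neg_sub_sum_le (sq_nonneg _) ht hn (le_refl (10 * n)))
    rw [gradNorm_taylorWeight, eval_taylorWeight]
    have hle : euclNorm x ≤ Real.sqrt n :=
      hx.trans (Real.sqrt_le_sqrt (by linarith [(Nat.cast_nonneg n : (0 : ℝ) ≤ n)]))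
    have habs : |∑ i ∈ Finset.range (10 * n), (-euclNorm x ^ 2) ^ i / (i.factorial : ℝ)| ≤
        10 * exp (-euclNorm x ^ 2) := by
      rw [abs_le]
      constructor <;> linarith [h.1, h.2]
    calc _ ≤ 2 * (10 * exp (-euclNorm x ^ 2)) * Real.sqrt n := by gcongr
      _ = _ := by ring
end
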